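/- For every integer ℓ ≥ 2 and every real x > 0, as n → ∞ the variance of the number of joint orbits satisfies Var(K_{ℓ,n}) ~ ((x·K_ℓ)^{1/ℓ}/(ℓ(ℓ−1))) · n^{(ℓ−1)/ℓ}, i.e. the ratio of the two sides tends to 1. -/

import Mathlib

open Filter Topology Real MeasureTheory Asymptotics

noncomputable section

/-- Number of joint orbits of the subgroup generated by a tuple of permutations. -/
def kappa {ℓ n : ℕ} (σ : Fin ℓ → Equiv.Perm (Fin n)) : ℕ :=
  Nat.card (MulAction.orbitRel.Quotient (Subgroup.closure (Set.range σ)) (Fin n))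

/-- `Acount ℓ n k` is the number of commuting `ℓ`-tuples of permutations of `{1,…,n}`
with exactly `k` joint orbits. -/
def Acount (ℓ n k : ℕ) : ℕ :=
  Nat.card {σ : Fin ℓ → Equiv.Perm (Fin n) //
    (∀ i j, σ i * σ j = σ j * σ i) ∧ kappa σ = k}

/-- `Hpoly ℓ n x = (1/n!) ∑_k A(ℓ,n,k) x^k`. -/
def Hpoly (ℓ n : ℕ) (x : ℝ) : ℝ :=
  (1 / (n.factorial : ℝ)) * ∑ k ∈ Finset.range (n + 1), (Acount ℓ n k : ℝ) * x ^ k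

/-- Expectation, under the Ewens-like measure `P_{ℓ,n,x}`, of `g(K_{ℓ,n})`. -/
def expectK (ℓ n : ℕ) (x : ℝ) (g : ℕ → ℝ) : ℝ :=
  (∑ k ∈ Finset.range (n + 1), g k * (Acount ℓ n k : ℝ) * x ^ k) /
    (∑ k ∈ Finset.range (n + 1), (Acount ℓ n k : ℝ) * x ^ k)

/-- Mean of `K_{ℓ,n}` under `P_{ℓ,n,x}`. -/
def meanK (ℓ n : ℕ) (x : ℝ) : ℝ := expectK ℓ n x (fun k => (k : ℝ))

/-- Variance of `K_{ℓ,n}` under `P_{ℓ,n,x}`. -/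
def varK (ℓ n : ℕ) (x : ℝ) : ℝ :=
  expectK ℓ n x (fun k => ((k : ℝ) - meanK ℓ n x) ^ 2)

/-- Real Riemann zeta values (as a series), `zetaR s = ∑_{m ≥ 1} m^{-s}`. -/
def zetaR (s : ℝ) : ℝ := ∑' m : ℕ, 1 / ((m : ℝ) + 1) ^ s

/-- The constant `K_ℓ = (ℓ-1)! ζ(2)⋯ζ(ℓ)`. -/
def Kconst (ℓ : ℕ) : ℝ := ((ℓ - 1).factorial : ℝ) * ∏ j ∈ Finset.Icc 2 ℓ, zetaR (j : ℝ)

/-- The multiple series `Z^{[ℓ]}_{α_1,…,α_ℓ}(t)` with complex exponents. -/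
def Zc (ℓ : ℕ) (α : Fin ℓ → ℂ) (t : ℝ) : ℂ :=
  ∑' δ : Fin ℓ → ℕ+,
    (∏ i, ((δ i : ℕ) : ℂ) ^ (α i - 1)) *
      Complex.exp (-(((∏ i, ((δ i : ℕ) : ℝ)) * t : ℝ) : ℂ))

/-- The multiple series `Z^{[ℓ]}_{α_1,…,α_ℓ}(t)` with real exponents. -/
def Zr (ℓ : ℕ) (α : Fin ℓ → ℝ) (t : ℝ) : ℝ :=
  ∑' δ : Fin ℓ → ℕ+,
    (∏ i, ((δ i : ℕ) : ℝ) ^ (α i - 1)) *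
      Real.exp (-(∏ i, ((δ i : ℕ) : ℝ)) * t)

/-- The staircase series `Z_m^{[ℓ]}(t) = Z^{[ℓ]}_{m,m-1,…,m-ℓ+1}(t)`. -/
def Zstair (ℓ : ℕ) (m : ℤ) (t : ℝ) : ℝ :=
  Zr ℓ (fun i => (m : ℝ) - (i : ℕ)) t

/-- The inverse function `(Z_ℓ^{[ℓ]})^{-1} : (0,∞) → (0,∞)`. -/
def ZstairInv (ℓ : ℕ) (u : ℝ) : ℝ :=
  Function.invFunOn (Zstair ℓ ℓ) (Set.Ioi 0) u

/-- The function `q_{ℓ,n}(y,u,θ)` from the saddle point analysis. -/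
def qfun (ℓ n : ℕ) (y u θ : ℝ) : ℂ :=
  Complex.I * (n : ℂ) * (θ : ℂ) - (y : ℂ) * ∑' δ : Fin ℓ → ℕ+,
    (∏ i, ((δ i : ℕ) : ℂ) ^ ((ℓ : ℤ) - 2 - (i : ℕ))) *
      Complex.exp (-(((∏ i, ((δ i : ℕ) : ℝ)) * u : ℝ) : ℂ)) *
      (Complex.exp (Complex.I * (((∏ i, ((δ i : ℕ) : ℝ)) * θ : ℝ) : ℂ)) - 1)

/-- The normalizing sequence `b_n = ((x K_ℓ)^{1/(2ℓ)}/√(ℓ(ℓ-1))) n^{(ℓ-1)/(2ℓ)}`. -/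
def bseq (ℓ : ℕ) (x : ℝ) (n : ℕ) : ℝ :=
  (x * Kconst ℓ) ^ ((1 : ℝ) / (2 * (ℓ : ℝ))) / Real.sqrt ((ℓ : ℝ) * ((ℓ : ℝ) - 1)) *
    (n : ℝ) ^ (((ℓ : ℝ) - 1) / (2 * (ℓ : ℝ)))

/-- The sequence `x_n = x e^{s/b_n}`. -/
def xseq (ℓ : ℕ) (x s : ℝ) (n : ℕ) : ℝ := x * Real.exp (s / bseq ℓ x n)

/-- The saddle point sequence `t_n = (Z_ℓ^{[ℓ]})^{-1}(n/x)`. -/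
def tseq (ℓ : ℕ) (x : ℝ) (n : ℕ) : ℝ := ZstairInv ℓ ((n : ℝ) / x)

end


section

noncomputable section

def orbS {G X : Type} [Group G] (φ : G →* Equiv.Perm X) : Setoid X where
  r x y := ∃ g, φ g x = y
  iseqv := by
    refine ⟨fun x => ⟨1, by simp⟩, ?_, ?_⟩
    · rintro x y ⟨g, rfl⟩
      exact ⟨g⁻¹, by simp⟩
    · rintro x y z ⟨g, rfl⟩ ⟨h, rfl⟩
      exact ⟨h * g, by simp⟩

def orbN {G X : Type} [Group G] (φ : G →* Equiv.Perm X) : ℕ := Nat.card (Quotient (orbS φ))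

def cnt (G X : Type) [Group G] (k : ℕ) : ℕ := Nat.card {φ : G →* Equiv.Perm X // orbN φ = k}

theorem cnt_congr {G X Y : Type} [Group G] (e : X ≃ Y) (k : ℕ) : cnt G X k = cnt G Y k := by
  let E : (G →* Equiv.Perm X) ≃ (G →* Equiv.Perm Y) :=
    { toFun := fun φ => e.permCongrHom.toMonoidHom.comp φ
      invFun := fun φ => e.symm.permCongrHom.toMonoidHom.comp φ
      left_inv := fun φ => by ext; simp
      right_inv := fun φ => by ext; simp }
  refine Nat.card_congr (E.subtypeEquiv fun φ => ?_)
  have : orbN φ = orbN (E φ) := by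
    refine Nat.card_congr (Quotient.congr e ?_)
    intro a b
    constructor
    · rintro ⟨g, rfl⟩; exact ⟨g, by simp [E]⟩
    · rintro ⟨g, h⟩; exact ⟨g, by simpa [E] using h⟩
  rw [this]

section glue
variable {G X Q : Type} [Group G] [MulAction G Q] (i : Q ↪ X)

abbrev Rest : Type := {x : X // ¬ x ∈ Set.range i}

def restrictHom (φ : G →* Equiv.Perm X) (h : ∀ g q, φ g (i q) = i (g • q)) :
    G →* Equiv.Perm (Rest i) where
  toFun g := (φ g).subtypePerm (p := fun x => ¬ x ∈ Set.range i) (by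
    intro x
    constructor
    · rintro hx ⟨q, rfl⟩
      exact hx ⟨g • q, (h g q).symm⟩
    · rintro hx ⟨q, hq⟩
      apply hx
      refine ⟨g⁻¹ • q, ?_⟩
      rw [← h, hq]; simp)
  map_one' := by ext x; simp
  map_mul' := by intro a b; ext x; simp; rfl

open Classical in
def glueHom (ψ : G →* Equiv.Perm (Rest i)) : G →* Equiv.Perm X :=
  (Equiv.Perm.subtypeCongrHom (fun x => x ∈ Set.range i)).comp
    (MonoidHom.prod
      (((Equiv.ofInjective i i.injective).permCongrHom.toMonoidHom).comp (MulAction.toPermHom G Q)) ψ)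

theorem glue_left (ψ : G →* Equiv.Perm (Rest i)) (g : G) (q : Q) :
    glueHom i ψ g (i q) = i (g • q) := by
  classical
  have hq : i q ∈ Set.range i := ⟨q, rfl⟩
  simp only [glueHom, MonoidHom.comp_apply]
  erw [Equiv.Perm.subtypeCongrHom_apply, Equiv.Perm.subtypeCongr.left_apply _ _ hq]
  have : (⟨i q, hq⟩ : Set.range i) = Equiv.ofInjective i i.injective q := rfl
  erw [this]
  simp

theorem glue_right (ψ : G →* Equiv.Perm (Rest i)) (g : G) (r : Rest i) :
    glueHom i ψ g r.1 = (ψ g r).1 := by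
  classical
  simp only [glueHom, MonoidHom.comp_apply]
  erw [Equiv.Perm.subtypeCongrHom_apply, Equiv.Perm.subtypeCongr.right_apply _ _ r.2]
  rfl

def glueEquiv : {φ : G →* Equiv.Perm X // ∀ g q, φ g (i q) = i (g • q)} ≃
    (G →* Equiv.Perm (Rest i)) where
  toFun φ := restrictHom i φ.1 φ.2
  invFun ψ := ⟨glueHom i ψ, glue_left i ψ⟩
  left_inv := by
    rintro ⟨φ, h⟩
    ext g x
    by_cases hx : x ∈ Set.range i
    · obtain ⟨q, rfl⟩ := hx
      simp only [glue_left, h]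
    · exact glue_right i (restrictHom i φ h) g ⟨x, hx⟩
  right_inv := by
    intro ψ
    ext g r
    exact glue_right i ψ g r

theorem orbN_glue [MulAction.IsPretransitive G Q] [Nonempty Q] [Finite X]
    (φ : G →* Equiv.Perm X) (h : ∀ g q, φ g (i q) = i (g • q)) :
    orbN φ = orbN (restrictHom i φ h) + 1 := by
  classical
  have : Finite (Rest i) := inferInstanceAs (Finite {x : X // ¬ x ∈ Set.range i})
  rw [orbN, orbN, ← Finite.card_option]
  symm
  let f : Option (Quotient (orbS (restrictHom i φ h))) → Quotient (orbS φ) := fun o =>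
    o.elim (Quotient.mk _ (i (Classical.arbitrary Q)))
      (Quotient.map' (fun r => r.1) (by
        rintro a b ⟨g, rfl⟩
        exact ⟨g, rfl⟩))
  refine Nat.card_congr (Equiv.ofBijective f ⟨?_, ?_⟩)
  · have key : ∀ r : Rest i, f none ≠ f (some (Quotient.mk _ r)) := by
      intro r hr
      obtain ⟨g, hg⟩ := Quotient.exact hr
      rw [h] at hg
      exact r.2 ⟨_, hg⟩
    rintro (_ | a) (_ | b) hab
    · rfl
    · induction b using Quotient.inductionOn
      exact absurd hab (key _)
    · induction a using Quotient.inductionOn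
      exact absurd hab.symm (key _)
    · induction a using Quotient.inductionOn
      induction b using Quotient.inductionOn
      obtain ⟨g, hg⟩ := Quotient.exact hab
      congr 1
      exact Quotient.sound ⟨g, Subtype.ext hg⟩
  · intro y
    induction y using Quotient.inductionOn with
    | _ y =>
    by_cases hy : y ∈ Set.range i
    · obtain ⟨q, rfl⟩ := hy
      refine ⟨none, Quotient.sound ?_⟩
      obtain ⟨g, hg⟩ := MulAction.exists_smul_eq G (Classical.arbitrary Q) q
      exact ⟨g, by rw [h, hg]⟩
    · exact ⟨some (Quotient.mk _ ⟨y, hy⟩), rfl⟩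

theorem card_equivariant [MulAction.IsPretransitive G Q] [Nonempty Q] [Finite X] (k : ℕ) :
    Nat.card {φ : G →* Equiv.Perm X // (∀ g q, φ g (i q) = i (g • q)) ∧ orbN φ = k + 1} =
      cnt G (Rest i) k := by
  rw [cnt]
  refine Nat.card_congr ((Equiv.subtypeSubtypeEquivSubtypeInter _ _).symm.trans
    ((glueEquiv i).subtypeEquiv ?_))
  rintro ⟨φ, h⟩
  simp only [glueEquiv, Equiv.coe_fn_mk]
  rw [orbN_glue i φ h]
  omega
end glue

theorem cnt_rec (G : Type) [Group G] (hL : ∀ j : ℕ, Finite {L : Subgroup G // L.index = j + 1})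
    (hG : ∀ n, Finite (G →* Equiv.Perm (Fin n))) (n k : ℕ) :
    n * cnt G (Fin n) (k + 1) = ∑ j : Fin n, Nat.card {L : Subgroup G // L.index = j + 1} *
      n.descFactorial (j + 1) * cnt G (Fin (n - (j + 1))) k := by
  classical
  have := hG n
  have := fun j => Fintype.ofFinite {L : Subgroup G // L.index = j + 1}
  let T := Σ j : Fin n, Σ L : {L : Subgroup G // L.index = j + 1}, (G ⧸ L.1 ↪ Fin n)
  let P : T → (G →* Equiv.Perm (Fin n)) → Prop := fun t φ =>
    (∀ g q, φ g (t.2.2 q) = t.2.2 (g • q)) ∧ orbN φ = k + 1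
  have hfe : ∀ (j : ℕ) (L : {L : Subgroup G // L.index = j + 1}), Finite (G ⧸ L.1) := by
    intro j L
    apply Subgroup.index_ne_zero_iff_finite.1
    rw [L.2]; omega
  have e1 : Nat.card (Σ t : T, {φ // P t φ}) =
      Nat.card (Fin n × {φ : G →* Equiv.Perm (Fin n) // orbN φ = k + 1}) := by
    refine Nat.card_congr (Equiv.ofBijective
      (fun s => (s.1.2.2 (QuotientGroup.mk 1), ⟨s.2.1, s.2.2.2⟩)) ⟨?_, ?_⟩)
    · rintro ⟨⟨j, ⟨L, hLj⟩, i⟩, ⟨φ, hφ, ho⟩⟩ ⟨⟨j', ⟨L', hLj'⟩, i'⟩, ⟨φ', hφ', ho'⟩⟩ hab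
      simp only [Prod.mk.injEq, Subtype.mk.injEq] at hab
      obtain ⟨hp, rfl⟩ := hab
      simp only at hφ hφ'
      have hh : ∀ g : G, i (QuotientGroup.mk g) = i' (QuotientGroup.mk g) := by
        intro g
        have h1 := hφ g (QuotientGroup.mk 1)
        have h2 := hφ' g (QuotientGroup.mk 1)
        rw [hp, h2] at h1
        simpa [MulAction.Quotient.smul_mk] using h1.symm
      have hLL : L = L' := by
        ext g
        have a1 : g ∈ L ↔ i (QuotientGroup.mk g) = i (QuotientGroup.mk 1) := by
          rw [i.injective.eq_iff, eq_comm, QuotientGroup.eq]; simp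
        have a2 : g ∈ L' ↔ i' (QuotientGroup.mk g) = i' (QuotientGroup.mk 1) := by
          rw [i'.injective.eq_iff, eq_comm, QuotientGroup.eq]; simp
        rw [a1, a2, hh, hp]
      subst hLL
      have hjj : j = j' := by
        apply Fin.ext; omega
      subst hjj
      have hii : i = i' := by
        ext q
        induction q using QuotientGroup.induction_on
        rw [hh]
      subst hii
      rfl
    · rintro ⟨p, ⟨φ, ho⟩⟩
      let _ : MulAction G (Fin n) := MulAction.compHom (Fin n) φ
      have hsm : ∀ (g : G) (y : Fin n), g • y = φ g y := fun g y => rfl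
      let L := MulAction.stabilizer G p
      have hi0 : L.index ≠ 0 := by
        have := Finite.of_injective _ (MulAction.injective_ofQuotientStabilizer G p)
        exact Subgroup.index_ne_zero_iff_finite.2 this
      have hin : L.index ≤ n := by
        have := Nat.card_le_card_of_injective _ (MulAction.injective_ofQuotientStabilizer G p)
        rw [Nat.card_eq_fintype_card (α := Fin n), Fintype.card_fin] at this
        exact this
      refine ⟨⟨⟨⟨L.index - 1, by omega⟩, ⟨L, by simp; omega⟩,
        ⟨MulAction.ofQuotientStabilizer G p, MulAction.injective_ofQuotientStabilizer G p⟩⟩,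
        ⟨φ, ?_, ho⟩⟩, ?_⟩
      · intro g q
        simp only [Function.Embedding.coeFn_mk]
        rw [MulAction.ofQuotientStabilizer_smul, hsm]
      · simp only [Function.Embedding.coeFn_mk]
        rw [MulAction.ofQuotientStabilizer_mk]
        simp
  rw [Nat.card_prod] at e1
  simp only [Nat.card_eq_fintype_card (α := Fin n), Fintype.card_fin] at e1
  rw [cnt, ← e1]
  have hT : ∀ (j : Fin n) (L : {L : Subgroup G // L.index = j + 1}), Finite (G ⧸ L.1 ↪ Fin n) := by
    intro j L
    have := hfe j L
    infer_instance
  have := fun j L => @Fintype.ofFinite _ (hT j L)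
  rw [Nat.card_sigma, Fintype.sum_sigma]
  refine Finset.sum_congr rfl fun j _ => ?_
  rw [Fintype.sum_sigma]
  have hin : ∀ (L : {L : Subgroup G // L.index = j + 1}),
      ∑ i : (G ⧸ L.1 ↪ Fin n), Nat.card {φ // P ⟨j, L, i⟩ φ} =
        n.descFactorial (j + 1) * cnt G (Fin (n - (j + 1))) k := by
    intro L
    have := hfe j L
    have := Fintype.ofFinite (G ⧸ L.1)
    have hcQ : Fintype.card (G ⧸ L.1) = j + 1 := by
      rw [← Nat.card_eq_fintype_card]; exact L.2
    have h1 : ∀ i : (G ⧸ L.1 ↪ Fin n), Nat.card {φ // P ⟨j, L, i⟩ φ} =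
        cnt G (Fin (n - (j + 1))) k := by
      intro i
      have : MulAction.IsPretransitive G (G ⧸ L.1) := inferInstance
      refine (card_equivariant i k).trans (cnt_congr ?_ k)
      refine Fintype.equivFinOfCardEq ?_
      rw [Fintype.card_subtype_compl, Fintype.card_fin]
      congr 1
      refine Eq.trans ?_ hcQ
      exact (Fintype.card_congr (Equiv.ofInjective i i.injective)).symm
    rw [Finset.sum_congr rfl (fun i _ => h1 i), Finset.sum_const, Finset.card_univ,
      Fintype.card_embedding_eq, hcQ, Fintype.card_fin, smul_eq_mul]
  rw [Finset.sum_congr rfl (fun L _ => hin L), Finset.sum_const, Finset.card_univ, smul_eq_mul,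
    mul_assoc, Nat.card_eq_fintype_card]

theorem cnt_zero (G : Type) [Group G] (n : ℕ) :
    cnt G (Fin n) 0 = if n = 0 then 1 else 0 := by
  split_ifs with h
  · subst h
    rw [cnt]
    have : Unique {φ : G →* Equiv.Perm (Fin 0) // orbN φ = 0} :=
      { default := ⟨1, by simp [orbN]⟩
        uniq := fun a => Subtype.ext (by ext g x; exact x.elim0) }
    exact Nat.card_unique
  · rw [cnt]
    have : IsEmpty {φ : G →* Equiv.Perm (Fin n) // orbN φ = 0} := by
      constructor
      rintro ⟨φ, hφ⟩
      rw [orbN, Nat.card_eq_zero] at hφ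
      rcases hφ with h1 | h1
      · exact h1.false (Quotient.mk _ ⟨0, by omega⟩)
      · exact not_finite (Quotient (orbS φ))
    exact Nat.card_of_isEmpty

end

end

section

noncomputable section

theorem index_of_fibers {A B : Type} [Group A] (L : Subgroup A) (F : A → B)
    (hs : Function.Surjective F) (h : ∀ x y, F x = F y ↔ x⁻¹ * y ∈ L) : L.index = Nat.card B := by
  refine Nat.card_congr (Equiv.ofBijective (Quotient.lift F ?_) ⟨?_, ?_⟩)
  · intro a b hab
    rw [h]
    exact QuotientGroup.leftRel_apply.1 hab
  · intro a b
    induction a using Quotient.inductionOn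
    induction b using Quotient.inductionOn
    intro hab
    exact Quotient.sound (QuotientGroup.leftRel_apply.2 ((h _ _).1 hab))
  · intro b
    obtain ⟨a, rfl⟩ := hs b
    exact ⟨Quotient.mk _ a, rfl⟩

section
variable {G : Type} [CommGroup G]

def mkL (H : Subgroup G) (c : G ⧸ H) (e : ℕ) : Subgroup (G × Multiplicative ℤ) where
  carrier := {p | ∃ r : ℤ, Multiplicative.toAdd p.2 = e * r ∧ (QuotientGroup.mk p.1 : G ⧸ H) = c ^ r}
  mul_mem' := by
    rintro a b ⟨r, hr, hr'⟩ ⟨s, hs, hs'⟩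
    refine ⟨r + s, ?_, ?_⟩
    · simp [hr, hs]; ring
    · simp [zpow_add, hr', hs']
  one_mem' := ⟨0, by simp, by simp⟩
  inv_mem' := by
    rintro a ⟨r, hr, hr'⟩
    refine ⟨-r, ?_, ?_⟩
    · simp [hr]
    · simp [hr']

theorem mem_mkL (H : Subgroup G) (c : G ⧸ H) (e : ℕ) (p : G × Multiplicative ℤ) :
    p ∈ mkL H c e ↔ ∃ r : ℤ, Multiplicative.toAdd p.2 = e * r ∧
      (QuotientGroup.mk p.1 : G ⧸ H) = c ^ r := Iff.rfl

theorem index_mkL (H : Subgroup G) (c : G ⧸ H) (e : ℕ) (he : 0 < e) :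
    (mkL H c e).index = H.index * e := by
  have he' : (e : ℤ) ≠ 0 := by positivity
  rw [index_of_fibers (B := (G ⧸ H) × ZMod e) (mkL H c e)
    (fun p => ((QuotientGroup.mk p.1 : G ⧸ H) * c ^ (-(Multiplicative.toAdd p.2 / (e : ℤ))),
      ((Multiplicative.toAdd p.2 : ℤ) : ZMod e)))]
  · rw [Nat.card_prod, Nat.card_zmod]; rfl
  · rintro ⟨a, z⟩
    obtain ⟨m, rfl⟩ := ZMod.intCast_surjective z
    obtain ⟨g, hg⟩ := QuotientGroup.mk_surjective (a * c ^ (m / (e : ℤ)))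
    refine ⟨(g, Multiplicative.ofAdd m), ?_⟩
    simp [hg]
  · rintro ⟨g, m⟩ ⟨g', m'⟩
    obtain ⟨m, rfl⟩ := Multiplicative.ofAdd.surjective m
    obtain ⟨m', rfl⟩ := Multiplicative.ofAdd.surjective m'
    simp only [Prod.mk.injEq, mem_mkL, toAdd_ofAdd, Prod.mk_mul_mk, Prod.inv_mk,
      QuotientGroup.mk_mul, QuotientGroup.mk_inv, toAdd_mul, toAdd_inv]
    have key : ∀ r : ℤ, -m + m' = e * r → -(m / (e : ℤ)) = r + -(m' / (e : ℤ)) := by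
      intro r hr
      have : m' = m + e * r := by linarith
      rw [this, Int.add_mul_ediv_left _ _ he']; ring
    constructor
    · rintro ⟨h1, h2⟩
      rw [ZMod.intCast_eq_intCast_iff_dvd_sub] at h2
      obtain ⟨r, hr⟩ := h2
      refine ⟨r, by linarith, ?_⟩
      rw [key r (by linarith), zpow_add, ← mul_assoc] at h1
      have := mul_right_cancel h1
      rw [← this]; simp
    · rintro ⟨r, hr, h2⟩
      constructor
      · rw [key r hr, zpow_add, ← mul_assoc]
        congr 1
        rw [← h2]; simp
      · rw [ZMod.intCast_eq_intCast_iff_dvd_sub]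
        exact ⟨r, by linarith⟩

theorem exists_mkL (L : Subgroup (G × Multiplicative ℤ)) (hL : L.index ≠ 0) :
    ∃ (H : Subgroup G) (c : G ⧸ H) (e : ℕ), 0 < e ∧ mkL H c e = L := by
  have hpow : ((1 : G), Multiplicative.ofAdd (1 : ℤ)) ^ L.index ∈ L := L.pow_index_mem _
  let P : AddSubgroup ℤ := AddSubgroup.map (MonoidHom.toAdditive (MonoidHom.snd G (Multiplicative ℤ)))
    (Subgroup.toAddSubgroup L) |>.map (AddEquiv.refl ℤ).toAddMonoidHom
  have hP : ∀ m : ℤ, m ∈ P ↔ ∃ g : G, (g, Multiplicative.ofAdd m) ∈ L := by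
    intro m
    constructor
    · rintro ⟨_, ⟨y, hy, rfl⟩, rfl⟩
      exact ⟨(Additive.toMul y).1, hy⟩
    · rintro ⟨g, hg⟩
      exact ⟨_, ⟨Additive.ofMul (g, Multiplicative.ofAdd m), hg, rfl⟩, rfl⟩
  obtain ⟨e0, he0⟩ := Int.subgroup_cyclic P
  have hP2 : ∀ m : ℤ, m ∈ P ↔ (e0.natAbs : ℤ) ∣ m := by
    intro m
    rw [he0, AddSubgroup.mem_closure_singleton, Int.natAbs_dvd]
    constructor
    · rintro ⟨n, rfl⟩; simp
    · rintro ⟨n, rfl⟩; exact ⟨n, by simp [mul_comm]⟩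
  have hmem : ((L.index : ℕ) : ℤ) ∈ P := by
    rw [hP]
    refine ⟨1, ?_⟩
    have : ((1 : G), Multiplicative.ofAdd (1 : ℤ)) ^ L.index =
        (1, Multiplicative.ofAdd ((L.index : ℕ) : ℤ)) := by
      ext <;> simp
    rwa [this] at hpow
  have he : 0 < e0.natAbs := by
    rcases Nat.eq_zero_or_pos e0.natAbs with h | h
    · rw [hP2, h] at hmem
      simp at hmem
      exact absurd hmem hL
    · exact h
  obtain ⟨v, hv⟩ := (hP _).1 ((hP2 (e0.natAbs : ℤ)).2 dvd_rfl)
  let H : Subgroup G := L.comap (MonoidHom.inl G (Multiplicative ℤ))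
  refine ⟨H, QuotientGroup.mk v, e0.natAbs, he, ?_⟩
  ext ⟨g, m⟩
  obtain ⟨m, rfl⟩ := Multiplicative.ofAdd.surjective m
  rw [mem_mkL]
  have hv' : ∀ r : ℤ, (v ^ r, Multiplicative.ofAdd ((e0.natAbs : ℤ) * r)) ∈ L := by
    intro r
    have := L.zpow_mem hv r
    convert this using 1
    ext
    · rfl
    · simp [mul_comm]
  have hq : ∀ r : ℤ, (QuotientGroup.mk g : G ⧸ H) = (QuotientGroup.mk v : G ⧸ H) ^ r ↔
      (v ^ (-r) * g, (1 : Multiplicative ℤ)) ∈ L := by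
    intro r
    rw [← QuotientGroup.mk_zpow, eq_comm, QuotientGroup.eq, Subgroup.mem_comap, zpow_neg]
    rfl
  constructor
  · rintro ⟨r, hr, h⟩
    rw [hq] at h
    have := L.mul_mem (hv' r) h
    rw [← hr] at this
    simpa using this
  · intro h
    obtain ⟨r, hr⟩ := (hP2 m).1 ((hP m).2 ⟨g, h⟩)
    refine ⟨r, hr, ?_⟩
    rw [hq]
    have := L.mul_mem (hv' (-r)) h
    rw [hr] at this
    convert this using 1
    ext
    · simp
    · simp

def subEquivFun (n : ℕ) : (Σ d : n.divisors, Σ H : {H : Subgroup G // H.index = d.1}, G ⧸ H.1) →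
    {L : Subgroup (G × Multiplicative ℤ) // L.index = n} := fun s =>
  ⟨mkL s.2.1.1 s.2.2 (n / s.1.1), by
    have hd := Nat.mem_divisors.1 s.1.2
    have : 0 < n / s.1.1 := Nat.div_pos (Nat.le_of_dvd (Nat.pos_of_ne_zero hd.2) hd.1)
      (Nat.pos_of_dvd_of_pos hd.1 (Nat.pos_of_ne_zero hd.2))
    rw [index_mkL _ _ _ this, s.2.1.2, Nat.mul_div_cancel' hd.1]⟩

theorem subEquiv_bij (n : ℕ) (hn : n ≠ 0) : Function.Bijective (subEquivFun (G := G) n) := by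
  constructor
  · rintro ⟨⟨d, hd⟩, ⟨H, hH⟩, c⟩ ⟨⟨d', hd'⟩, ⟨H', hH'⟩, c'⟩ heq
    simp only [subEquivFun, Subtype.mk.injEq] at heq hH hH'
    have hpos : ∀ d ∈ n.divisors, ((n / d : ℕ) : ℤ) ≠ 0 := by
      intro d hd
      have hd := Nat.mem_divisors.1 hd
      have : 0 < n / d := Nat.div_pos (Nat.le_of_dvd (Nat.pos_of_ne_zero hd.2) hd.1)
        (Nat.pos_of_dvd_of_pos hd.1 (Nat.pos_of_ne_zero hd.2))
      positivity
    have hHm : ∀ (d : ℕ) (hd : d ∈ n.divisors) (H : Subgroup G) (c : G ⧸ H) (g : G),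
        g ∈ H ↔ (g, 1) ∈ mkL H c (n / d) := by
      intro d hd H c g
      rw [mem_mkL]
      have h0 := hpos d hd
      constructor
      · intro hg
        refine ⟨0, by simp, ?_⟩
        simpa using hg
      · rintro ⟨r, hr, h⟩
        simp only [toAdd_one] at hr
        have : r = 0 := by
          rcases mul_eq_zero.1 hr.symm with h | h
          · exact absurd h h0
          · exact h
        subst this
        simpa using h
    have hHH : H = H' := by
      ext g
      rw [hHm d hd H c, hHm d' hd' H' c', heq]
    subst hHH
    have hdd : d = d' := by rw [← hH, ← hH']
    subst hdd
    have : c = c' := by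
      obtain ⟨g, rfl⟩ := QuotientGroup.mk_surjective c
      have h1 : (g, Multiplicative.ofAdd ((n / d : ℕ) : ℤ)) ∈ mkL H (QuotientGroup.mk g) (n / d) := by
        rw [mem_mkL]; exact ⟨1, by simp, by simp⟩
      rw [heq, mem_mkL] at h1
      obtain ⟨r, hr, h⟩ := h1
      have : r = 1 := by
        simp only [toAdd_ofAdd] at hr
        have h0 := hpos d hd
        have : ((n / d : ℕ) : ℤ) * 1 = ((n / d : ℕ) : ℤ) * r := by rw [← hr, mul_one]
        exact (mul_left_cancel₀ h0 this).symm
      subst this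
      simpa using h
    subst this
    rfl
  · rintro ⟨L, hL⟩
    obtain ⟨H, c, e, he, h⟩ := exists_mkL L (by rw [hL]; exact hn)
    have hi := index_mkL H c e he
    rw [h, hL] at hi
    have hd : H.index ∈ n.divisors := Nat.mem_divisors.2 ⟨⟨e, hi⟩, hn⟩
    refine ⟨⟨⟨H.index, hd⟩, ⟨H, rfl⟩, c⟩, ?_⟩
    simp only [subEquivFun, Subtype.mk.injEq]
    have : n / H.index = e := by
      rw [hi]
      apply Nat.mul_div_cancel_left
      rcases Nat.eq_zero_or_pos H.index with h0 | h0
      · rw [h0] at hi; simp at hi; exact absurd hi hn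
      · exact h0
    rw [this, h]

theorem sub_step (hf : ∀ d : ℕ, d ≠ 0 → Finite {H : Subgroup G // H.index = d}) (n : ℕ) (hn : n ≠ 0) :
    Finite {L : Subgroup (G × Multiplicative ℤ) // L.index = n} ∧
    Nat.card {L : Subgroup (G × Multiplicative ℤ) // L.index = n} =
      ∑ d ∈ n.divisors, d * Nat.card {H : Subgroup G // H.index = d} := by
  have hd0 : ∀ d : n.divisors, d.1 ≠ 0 := fun d => (Nat.pos_of_mem_divisors d.2).ne'
  have hF : ∀ d : n.divisors, Finite {H : Subgroup G // H.index = d.1} := fun d => hf _ (hd0 d)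
  have hQ : ∀ (d : n.divisors) (H : {H : Subgroup G // H.index = d.1}), Finite (G ⧸ H.1) := by
    intro d H
    apply Subgroup.index_ne_zero_iff_finite.1
    rw [H.2]; exact hd0 d
  have := fun d => @Fintype.ofFinite _ (hF d)
  refine ⟨Finite.of_surjective _ (subEquiv_bij n hn).2, ?_⟩
  rw [← Nat.card_congr (Equiv.ofBijective _ (subEquiv_bij (G := G) n hn)), Nat.card_sigma,
    ← Finset.sum_coe_sort n.divisors (fun d => d * Nat.card {H : Subgroup G // H.index = d})]
  refine Finset.sum_congr rfl fun d _ => ?_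
  rw [Nat.card_sigma]
  have : ∀ H : {H : Subgroup G // H.index = d.1}, Nat.card (G ⧸ H.1) = d.1 := fun H => H.2
  rw [Finset.sum_congr rfl (fun H _ => this H), Finset.sum_const, Finset.card_univ, smul_eq_mul,
    mul_comm, Nat.card_eq_fintype_card]

end
end

end

section
open Filter Topology Real MeasureTheory Asymptotics

noncomputable section

abbrev ZZ (ℓ : ℕ) : Type := Fin ℓ → Multiplicative ℤ

def aa (ℓ n : ℕ) : ℕ := Nat.card {L : Subgroup (ZZ ℓ) // L.index = n}

def zzEquiv (ℓ : ℕ) : ZZ (ℓ + 1) ≃* ZZ ℓ × Multiplicative ℤ where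
  toFun v := (fun i => v i.succ, v 0)
  invFun p := Fin.cons p.2 p.1
  left_inv v := by
    funext i
    refine Fin.cases ?_ (fun i => ?_) i <;> simp
  right_inv p := by simp
  map_mul' a b := by rfl

theorem sub_congr {A B : Type} [Group A] [Group B] (e : A ≃* B) (n : ℕ) :
    Nonempty ({L : Subgroup A // L.index = n} ≃ {L : Subgroup B // L.index = n}) := by
  refine ⟨(e.mapSubgroup.toEquiv).subtypeEquiv fun L => ?_⟩
  have : (e.mapSubgroup.toEquiv L).index = L.index :=
    Subgroup.index_map_of_bijective (f := e.toMonoidHom) e.bijective L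
  rw [this]

theorem aa_fin (ℓ : ℕ) : ∀ n ≠ 0, Finite {L : Subgroup (ZZ ℓ) // L.index = n} := by
  induction ℓ with
  | zero => intro n _; infer_instance
  | succ ℓ ih =>
    intro n hn
    obtain ⟨e⟩ := sub_congr (zzEquiv ℓ) n
    have := (sub_step ih n hn).1
    exact Finite.of_equiv _ e.symm

theorem aa_succ (ℓ n : ℕ) (hn : n ≠ 0) : aa (ℓ + 1) n = ∑ d ∈ n.divisors, d * aa ℓ d := by
  obtain ⟨e⟩ := sub_congr (zzEquiv ℓ) n
  rw [aa, Nat.card_congr e, (sub_step (aa_fin ℓ) n hn).2]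
  rfl

theorem aa_zero (n : ℕ) : aa 0 n = if n = 1 then 1 else 0 := by
  have hi : ∀ L : Subgroup (ZZ 0), L.index = 1 := fun L => by
    rw [Subgroup.index_eq_one]; exact Subsingleton.elim _ _
  rw [aa]
  split_ifs with h
  · subst h
    have : Unique {L : Subgroup (ZZ 0) // L.index = 1} :=
      { default := ⟨⊤, hi _⟩
        uniq := fun a => Subtype.ext (Subsingleton.elim _ _) }
    exact Nat.card_unique
  · have : IsEmpty {L : Subgroup (ZZ 0) // L.index = n} := ⟨fun L => h (L.2.symm.trans (hi _))⟩
    exact Nat.card_of_isEmpty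

def tupEquiv (ℓ : ℕ) (M : Type) [Group M] :
    {σ : Fin ℓ → M // ∀ i j, σ i * σ j = σ j * σ i} ≃ (ZZ ℓ →* M) :=
  Equiv.trans (Equiv.subtypeEquiv (Equiv.piCongrRight fun _ => zpowersHom M) (by
    intro σ
    constructor
    · intro h i j _ x y
      simp only [Equiv.piCongrRight_apply, Pi.map_apply, zpowersHom_apply]
      exact Commute.zpow_zpow (h i j) _ _
    · intro h i j
      by_cases hij : i = j
      · rw [hij]
      · have := h hij (Multiplicative.ofAdd 1) (Multiplicative.ofAdd 1)
        have h2 : Commute (σ i) (σ j) := by simpa [zpowersHom_apply] using this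
        exact h2)) MonoidHom.noncommPiCoprodEquiv

theorem tup_range (ℓ : ℕ) (M : Type) [Group M]
    (σ : {σ : Fin ℓ → M // ∀ i j, σ i * σ j = σ j * σ i}) :
    (tupEquiv ℓ M σ).range = Subgroup.closure (Set.range σ.1) := by
  have : (tupEquiv ℓ M σ).range = ⨆ i, (zpowersHom M (σ.1 i)).range := by
    refine MonoidHom.noncommPiCoprod_range (hcomm := ?_)
    intro i j _ x y
    exact Commute.zpow_zpow (σ.2 i j) _ _
  have h2 : Subgroup.closure (Set.range σ.1) = ⨆ i, Subgroup.closure {σ.1 i} := by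
    rw [← Subgroup.closure_iUnion, Set.iUnion_singleton_eq_range]
  rw [this, h2]
  refine iSup_congr fun i => ?_
  rw [← Subgroup.zpowers_eq_closure]
  ext m
  simp only [MonoidHom.mem_range, zpowersHom_apply, Subgroup.mem_zpowers_iff]
  exact Iff.rfl

theorem Acount_eq (ℓ n k : ℕ) : Acount ℓ n k = cnt (ZZ ℓ) (Fin n) k := by
  rw [Acount, cnt]
  refine Nat.card_congr ((Equiv.subtypeSubtypeEquivSubtypeInter _ (fun σ => kappa σ = k)).symm.trans
    ((tupEquiv ℓ _).subtypeEquiv ?_))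
  intro σ
  have : kappa σ.1 = orbN (tupEquiv ℓ _ σ) := by
    rw [kappa, orbN]
    refine Nat.card_congr (Quotient.congr (Equiv.refl _) ?_)
    intro a b
    rw [← tup_range]
    constructor
    · intro h
      obtain ⟨⟨_, ⟨g, rfl⟩⟩, h⟩ := h
      exact Setoid.symm' _ ⟨g, h⟩
    · intro h
      obtain ⟨g, h⟩ := Setoid.symm' _ h
      exact ⟨⟨_, ⟨g, rfl⟩⟩, h⟩
  rw [this]

theorem Acount_zero (ℓ n : ℕ) : Acount ℓ n 0 = if n = 0 then 1 else 0 := by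
  rw [Acount_eq, cnt_zero]

theorem Acount_zero_succ (ℓ k : ℕ) : Acount ℓ 0 (k + 1) = 0 := by
  rw [Acount]
  have : IsEmpty {σ : Fin ℓ → Equiv.Perm (Fin 0) //
    (∀ i j, σ i * σ j = σ j * σ i) ∧ kappa σ = k + 1} := by
    constructor
    rintro ⟨σ, h, h2⟩
    have : kappa σ = 0 := by
      rw [kappa, Nat.card_eq_zero]
      left
      infer_instance
    omega
  exact Nat.card_of_isEmpty

theorem Acount_rec (ℓ n k : ℕ) : n * Acount ℓ n (k + 1) =
    ∑ j ∈ Finset.range n, aa ℓ (j + 1) * n.descFactorial (j + 1) * Acount ℓ (n - (j + 1)) k := by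
  simp only [Acount_eq]
  rw [cnt_rec (ZZ ℓ) (fun j => aa_fin ℓ _ (Nat.succ_ne_zero j)) ?_ n k]
  · rw [Finset.sum_range]; rfl
  · intro n
    exact Finite.of_equiv _ (tupEquiv ℓ _)

def bb (ℓ n : ℕ) : ℝ := (aa ℓ n : ℝ) / n

theorem Acount_coeff (ℓ k n : ℕ) : (Acount ℓ n k : ℝ) * k.factorial =
    n.factorial * PowerSeries.coeff n ((PowerSeries.mk (bb ℓ)) ^ k) := by
  induction k generalizing n with
  | zero =>
    rw [Acount_zero, pow_zero, PowerSeries.coeff_one]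
    split_ifs with h
    · simp [h]
    · simp
  | succ k ih =>
    rcases Nat.eq_zero_or_pos n with rfl | hn
    · rw [Acount_zero_succ, PowerSeries.coeff_zero_eq_constantCoeff_apply, map_pow]
      rw [← PowerSeries.coeff_zero_eq_constantCoeff_apply, PowerSeries.coeff_mk]
      simp [bb]
    · have h1 : (n : ℝ) * PowerSeries.coeff n ((PowerSeries.mk (bb ℓ)) ^ (k + 1)) =
          (k + 1) * ∑ j ∈ Finset.range n, (aa ℓ (j + 1) : ℝ) *
            PowerSeries.coeff (n - (j + 1)) ((PowerSeries.mk (bb ℓ)) ^ k) := by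
        obtain ⟨m, rfl⟩ : ∃ m, n = m + 1 := ⟨n - 1, by omega⟩
        have h0 : PowerSeries.derivative ℝ ((PowerSeries.mk (bb ℓ)) ^ (k + 1)) =
            PowerSeries.C ((k : ℝ) + 1) * (PowerSeries.derivative ℝ (PowerSeries.mk (bb ℓ)) *
              (PowerSeries.mk (bb ℓ)) ^ k) := by
          rw [(PowerSeries.derivative ℝ).leibniz_pow]
          simp only [Nat.add_sub_cancel, smul_eq_mul, nsmul_eq_mul, map_add, map_natCast, map_one]
          push_cast
          ring
        have h2 := congrArg (PowerSeries.coeff m) h0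
        rw [PowerSeries.coeff_derivative, PowerSeries.coeff_C_mul, PowerSeries.coeff_mul,
          Finset.Nat.sum_antidiagonal_eq_sum_range_succ_mk] at h2
        push_cast
        rw [mul_comm, h2]
        congr 1
        refine Finset.sum_congr (M := ℝ) rfl fun j _ => ?_
        simp only [PowerSeries.coeff_derivative, PowerSeries.coeff_mk, bb]
        have : ((j : ℝ) + 1) ≠ 0 := by positivity
        push_cast
        rw [div_mul_cancel₀ _ this]
      have h3 : (n : ℝ) * Acount ℓ n (k + 1) = ∑ j ∈ Finset.range n, (aa ℓ (j + 1) : ℝ) *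
          n.descFactorial (j + 1) * Acount ℓ (n - (j + 1)) k := by
        exact_mod_cast Acount_rec ℓ n k
      have hn' : (n : ℝ) ≠ 0 := by positivity
      apply mul_left_cancel₀ hn'
      rw [← mul_assoc, h3, mul_left_comm, h1, Nat.factorial_succ, Finset.sum_mul, Finset.mul_sum,
        Finset.mul_sum]
      refine Finset.sum_congr rfl fun j hj => ?_
      have hj' := Finset.mem_range.1 hj
      have h4 := ih (n - (j + 1))
      have h5 : ((n - (j + 1)).factorial : ℝ) * n.descFactorial (j + 1) = n.factorial := by
        exact_mod_cast Nat.factorial_mul_descFactorial (by omega : j + 1 ≤ n)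
      rw [← h5]
      push_cast
      linear_combination ((aa ℓ (j + 1) : ℝ) * n.descFactorial (j + 1) * (k + 1)) * h4

end

end

section
open Filter Topology Real MeasureTheory Asymptotics

noncomputable section

def AF (ℓ : ℕ) : ArithmeticFunction ℕ := ⟨fun n => if n = 0 then 0 else aa ℓ n, by simp⟩

theorem AF_apply (ℓ n : ℕ) (hn : n ≠ 0) : AF ℓ n = aa ℓ n := by simp [AF, hn]

def idm (f : ArithmeticFunction ℕ) : ArithmeticFunction ℕ := ⟨fun n => n * f n, by simp⟩

theorem idm_apply (f : ArithmeticFunction ℕ) (n : ℕ) : idm f n = n * f n := rfl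

theorem idm_mul (f g : ArithmeticFunction ℕ) : idm (f * g) = idm f * idm g := by
  ext n
  rw [idm_apply, ArithmeticFunction.mul_apply, ArithmeticFunction.mul_apply, Finset.mul_sum]
  refine Finset.sum_congr rfl fun x hx => ?_
  rw [idm_apply, idm_apply, ← (Nat.mem_divisorsAntidiagonal.1 hx).1]
  ring

theorem idm_pow (k : ℕ) : idm (ArithmeticFunction.pow k) = ArithmeticFunction.pow (k + 1) := by
  ext n
  rw [idm_apply, ArithmeticFunction.pow_apply, ArithmeticFunction.pow_apply]
  by_cases hn : n = 0
  · simp [hn]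
  · simp [hn, pow_succ, mul_comm]

theorem AF_succ (ℓ : ℕ) : AF (ℓ + 1) = idm (AF ℓ) * ArithmeticFunction.zeta := by
  ext n
  rw [ArithmeticFunction.mul_zeta_apply]
  by_cases hn : n = 0
  · simp [hn]
  · rw [AF_apply _ _ hn, aa_succ _ _ hn]
    refine Finset.sum_congr rfl fun d hd => ?_
    rw [idm_apply, AF_apply _ _ (Nat.pos_of_mem_divisors hd).ne']

theorem AF_zero : AF 0 = 1 := by
  ext n
  by_cases hn : n = 0
  · simp [hn]
  · rw [AF_apply _ _ hn, aa_zero, ArithmeticFunction.one_apply]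

theorem AF_conv (ℓ : ℕ) : AF (ℓ + 1) = AF ℓ * ArithmeticFunction.pow ℓ := by
  induction ℓ with
  | zero =>
    rw [AF_succ, AF_zero, ArithmeticFunction.pow_zero_eq_zeta]
    congr 1
    ext n
    rw [idm_apply, ArithmeticFunction.one_apply]
    split_ifs with h
    · simp [h]
    · simp
  | succ ℓ ih =>
    rw [AF_succ (ℓ + 1)]
    nth_rewrite 1 [ih]
    rw [idm_mul, idm_pow, AF_succ]
    ring

theorem aa_conv (ℓ : ℕ) (n : ℕ+) :
    (aa (ℓ + 1) n : ℝ) = ∑ x : (n : ℕ).divisorsAntidiagonal, (aa ℓ x.1.1 : ℝ) * (x.1.2 : ℝ) ^ ℓ := by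
  rw [← AF_apply _ _ n.ne_zero, AF_conv, ArithmeticFunction.mul_apply]
  rw [Finset.sum_coe_sort (n : ℕ).divisorsAntidiagonal
    (fun x => (aa ℓ x.1 : ℝ) * (x.2 : ℝ) ^ ℓ)]
  push_cast
  refine Finset.sum_congr rfl fun x hx => ?_
  have h1 : x.1 ≠ 0 := Nat.left_ne_zero_of_mem_divisorsAntidiagonal hx
  have h2 : x.2 ≠ 0 := Nat.right_ne_zero_of_mem_divisorsAntidiagonal hx
  rw [AF_apply _ _ h1, ArithmeticFunction.pow_apply]
  simp [h2]

theorem conv_hasSum (ℓ : ℕ) (w : ℕ → ℝ) (S : ℝ)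
    (h : HasSum (fun p : ℕ+ × ℕ+ => (aa ℓ p.1 : ℝ) * ((p.2 : ℕ) : ℝ) ^ ℓ * w (p.1 * p.2)) S) :
    HasSum (fun n : ℕ+ => (aa (ℓ + 1) n : ℝ) * w n) S := by
  rw [← sigmaAntidiagonalEquivProd.hasSum_iff] at h
  refine h.sigma fun n => ?_
  rw [aa_conv, Finset.sum_mul]
  have := hasSum_fintype (fun x : (n : ℕ).divisorsAntidiagonal =>
    (aa ℓ x.1.1 : ℝ) * (x.1.2 : ℝ) ^ ℓ * w n)
  refine Eq.mp (congrArg (fun F => HasSum F _) ?_) this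
  funext x
  have hx := (Nat.mem_divisorsAntidiagonal.1 x.2).1
  simp only [Function.comp, sigmaAntidiagonalEquivProd, Equiv.coe_fn_mk, divisorsAntidiagonalFactors,
    PNat.mk_coe, hx]

theorem aa_lower (ℓ n : ℕ) (hn : n ≠ 0) : n ^ ℓ ≤ aa (ℓ + 1) n := by
  induction ℓ with
  | zero =>
    rw [aa_succ _ _ hn]
    refine le_trans ?_ (Finset.single_le_sum (f := fun d => d * aa 0 d) (fun _ _ => Nat.zero_le _)
      (Nat.one_mem_divisors.2 hn))
    simp [aa_zero]
  | succ ℓ ih =>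
    rw [aa_succ _ _ hn]
    refine le_trans ?_ (Finset.single_le_sum (f := fun d => d * aa (ℓ + 1) d)
      (fun _ _ => Nat.zero_le _) (Nat.mem_divisors_self n hn))
    rw [pow_succ, mul_comm]
    exact Nat.mul_le_mul_left _ ih

theorem zetaR_hasSum (r : ℕ) : HasSum (fun n : ℕ+ => 1 / ((n : ℕ) : ℝ) ^ (r + 2))
    (zetaR ((r + 2 : ℕ) : ℝ)) := by
  rw [zetaR, hasSum_pnat_iff_hasSum_succ (f := fun n : ℕ => 1 / (n : ℝ) ^ (r + 2))]
  have h : Summable (fun n : ℕ => 1 / ((n + 1 : ℕ) : ℝ) ^ (r + 2)) :=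
    (summable_nat_add_iff 1).2 (Real.summable_one_div_nat_pow.2 (by omega))
  convert h.hasSum using 3 with m
  rw [Real.rpow_natCast]; push_cast; rfl

theorem zetaR_pos (r : ℕ) : 0 < zetaR ((r + 2 : ℕ) : ℝ) := by
  have h := zetaR_hasSum r
  have h1 := le_hasSum h 1 (fun n _ => by positivity)
  simp at h1
  push_cast
  linarith

theorem aa_dirichlet (ℓ r : ℕ) : HasSum (fun n : ℕ+ => (aa ℓ n : ℝ) * (1 / ((n : ℕ) : ℝ) ^ (ℓ + 1 + r)))
    (∏ i ∈ Finset.range ℓ, zetaR ((r + i + 2 : ℕ) : ℝ)) := by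
  induction ℓ generalizing r with
  | zero =>
    rw [Finset.prod_range_zero]
    have := hasSum_ite_eq (1 : ℕ+) (1 : ℝ)
    convert this using 2 with n
    rw [aa_zero]
    by_cases h : n = 1
    · simp [h]
    · have : (n : ℕ) ≠ 1 := by simpa using h
      simp [h, this]
  | succ ℓ ih =>
    apply conv_hasSum ℓ (fun n => 1 / (n : ℝ) ^ (ℓ + 1 + 1 + r))
    have h1 := ih (r + 1)
    have h2 := zetaR_hasSum r
    have h3 := h1.mul h2 (h1.summable.mul_of_nonneg h2.summable (fun n => by positivity)
      (fun n => by positivity))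
    rw [Finset.prod_range_succ']
    have e1 : (∏ k ∈ Finset.range ℓ, zetaR ((r + (k + 1) + 2 : ℕ) : ℝ)) * zetaR ((r + 0 + 2 : ℕ) : ℝ) =
        (∏ i ∈ Finset.range ℓ, zetaR ((r + 1 + i + 2 : ℕ) : ℝ)) * zetaR ((r + 2 : ℕ) : ℝ) := by
      congr 1
      refine Finset.prod_congr rfl fun i _ => ?_
      congr 2; omega
    rw [e1]
    refine Eq.mp (congrArg (fun F => HasSum F _) ?_) h3
    funext x
    have hd : ((x.1 : ℕ) : ℝ) ≠ 0 := by exact_mod_cast x.1.ne_zero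
    have he : ((x.2 : ℕ) : ℝ) ≠ 0 := by exact_mod_cast x.2.ne_zero
    push_cast
    rw [mul_pow, show ℓ + 1 + 1 + r = ℓ + (r + 2) by ring, show ℓ + 1 + (r + 1) = ℓ + (r + 2) by ring,
      pow_add ((x.2 : ℕ) : ℝ)]
    field_simp
    ring
end

end

section
open Filter Topology Real MeasureTheory Asymptotics

noncomputable section

theorem SS_upper (p : ℕ) (t : ℝ) (ht : 0 < t) :
    Summable (fun i : ℕ => ((i : ℝ) + 1) ^ p * exp (-t) ^ (i + 1)) ∧
    ∑' i : ℕ, ((i : ℝ) + 1) ^ p * exp (-t) ^ (i + 1) ≤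
      p.factorial * exp (-t) * (1 / (1 - exp (-t)) ^ (p + 1)) := by
  have hq0 : 0 < exp (-t) := exp_pos _
  have hq1 : exp (-t) < 1 := by rw [Real.exp_lt_one_iff]; linarith
  have hs := hasSum_choose_mul_geometric_of_norm_lt_one (𝕜 := ℝ) p (r := exp (-t))
    (by rw [Real.norm_of_nonneg hq0.le]; exact hq1)
  have hs2 := hs.mul_left ((p.factorial : ℝ) * exp (-t))
  have hle : ∀ i : ℕ, ((i : ℝ) + 1) ^ p * exp (-t) ^ (i + 1) ≤
      (p.factorial : ℝ) * exp (-t) * (((i + p).choose p : ℝ) * exp (-t) ^ i) := by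
    intro i
    have h1 := Nat.pow_succ_le_ascFactorial (i + 1) p
    rw [Nat.ascFactorial_eq_factorial_mul_choose] at h1
    have h2 : ((i : ℝ) + 1) ^ p ≤ p.factorial * ((i + p).choose p) := by exact_mod_cast h1
    calc ((i : ℝ) + 1) ^ p * exp (-t) ^ (i + 1) ≤
      (p.factorial * ((i + p).choose p)) * exp (-t) ^ (i + 1) := by gcongr
      _ = _ := by ring
  have hsm : Summable (fun i : ℕ => ((i : ℝ) + 1) ^ p * exp (-t) ^ (i + 1)) :=
    Summable.of_nonneg_of_le (fun i => by positivity) hle hs2.summable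
  refine ⟨hsm, ?_⟩
  rw [← hs2.tsum_eq]
  exact hsm.tsum_le_tsum hle hs2.summable

theorem SS_lower (p : ℕ) (t : ℝ) (ht : 0 < t) :
      p.factorial * exp (-t) ^ (p + 1) * (1 / (1 - exp (-t)) ^ (p + 1)) ≤
      ∑' i : ℕ, ((i : ℝ) + 1) ^ p * exp (-t) ^ (i + 1) := by
  have hq0 : 0 < exp (-t) := exp_pos _
  have hq1 : exp (-t) < 1 := by rw [Real.exp_lt_one_iff]; linarith
  have hs := hasSum_choose_mul_geometric_of_norm_lt_one (𝕜 := ℝ) p (r := exp (-t))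
    (by rw [Real.norm_of_nonneg hq0.le]; exact hq1)
  have hs2 := hs.mul_left ((p.factorial : ℝ) * exp (-t) ^ (p + 1))
  rw [← hs2.tsum_eq]
  refine Summable.tsum_le_tsum_of_inj (fun i => i + p) (fun a b h => by simpa using h)
    (fun c _ => by positivity) ?_ hs2.summable (SS_upper p t ht).1
  intro i
  have h1 := Nat.ascFactorial_le_pow_add i p
  rw [Nat.ascFactorial_eq_factorial_mul_choose] at h1
  have h2 : (p.factorial : ℝ) * ((i + p).choose p) ≤ (((i + p : ℕ) : ℝ) + 1) ^ p := by
    have h3 : p.factorial * ((i + p).choose p) ≤ (i + p + 1) ^ p :=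
      h1.trans (Nat.pow_le_pow_left (by omega) p)
    exact_mod_cast h3
  calc (p.factorial : ℝ) * exp (-t) ^ (p + 1) * (((i + p).choose p : ℝ) * exp (-t) ^ i)
    = ((p.factorial : ℝ) * ((i + p).choose p)) * exp (-t) ^ (i + p + 1) := by ring
    _ ≤ _ := by gcongr

def SS (p : ℕ) (t : ℝ) : ℝ := ∑' i : ℕ, ((i : ℝ) + 1) ^ p * exp (-t) ^ (i + 1)

theorem SS_hasSum (p : ℕ) (t : ℝ) (ht : 0 < t) :
    HasSum (fun e : ℕ+ => ((e : ℕ) : ℝ) ^ p * exp (-(((e : ℕ) : ℝ) * t))) (SS p t) := by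
  rw [hasSum_pnat_iff_hasSum_succ (f := fun n : ℕ => (n : ℝ) ^ p * exp (-((n : ℝ) * t)))]
  convert (SS_upper p t ht).1.hasSum using 3 with i
  · push_cast; rfl
  · rw [← Real.exp_nat_mul]; congr 1; ring
  · rfl

theorem SS_nonneg (p : ℕ) (t : ℝ) : 0 ≤ SS p t := tsum_nonneg fun i => by positivity

theorem SS_bound (p : ℕ) (t : ℝ) (ht : 0 < t) :
    t ^ (p + 1) * SS p t ≤ p.factorial * ((p + 1).factorial * exp 1) := by
  have h := (SS_upper p t ht).2
  have hq1 : exp (-t) < 1 := by rw [Real.exp_lt_one_iff]; linarith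
  have h1 : t / (1 - exp (-t)) ≤ 1 + t := by
    rw [div_le_iff₀ (by linarith)]
    have : exp (-t) * (1 + t) ≤ 1 := by
      calc exp (-t) * (1 + t) ≤ exp (-t) * exp t := by
            gcongr; linarith [Real.add_one_le_exp t]
        _ = 1 := by rw [← Real.exp_add]; simp
    nlinarith
  have h2 : (1 + t) ^ (p + 1) ≤ (p + 1).factorial * exp (1 + t) := by
    have := Real.pow_div_factorial_le_exp (1 + t) (by linarith) (p + 1)
    rw [div_le_iff₀ (by positivity)] at this
    linarith
  calc t ^ (p + 1) * SS p t ≤ t ^ (p + 1) * (p.factorial * exp (-t) * (1 / (1 - exp (-t)) ^ (p + 1))) := by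
        gcongr; exact h
    _ = p.factorial * (exp (-t) * (t / (1 - exp (-t))) ^ (p + 1)) := by
        rw [div_pow]; ring
    _ ≤ p.factorial * (exp (-t) * (1 + t) ^ (p + 1)) := by
        have : 0 ≤ t / (1 - exp (-t)) := div_nonneg ht.le (by linarith)
        gcongr
    _ ≤ p.factorial * (exp (-t) * ((p + 1).factorial * exp (1 + t))) := by gcongr
    _ = _ := by
        rw [Real.exp_add, Real.exp_neg]; field_simp

theorem tend_aux : Tendsto (fun t : ℝ => t / (1 - exp (-t))) (𝓝[>] 0) (𝓝 1) := by
  have h : HasDerivAt (fun t : ℝ => 1 - exp (-t)) 1 0 := by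
    have := ((hasDerivAt_neg (0:ℝ)).exp).const_sub 1
    simpa using this
  have h2 := h.tendsto_slope_zero_right
  have h3 := h2.inv₀ one_ne_zero
  simp only [inv_one] at h3
  refine h3.congr' ?_
  filter_upwards [self_mem_nhdsWithin] with t ht
  simp [div_eq_mul_inv, mul_comm]

theorem SS_tendsto (p : ℕ) : Tendsto (fun t : ℝ => t ^ (p + 1) * SS p t) (𝓝[>] 0)
    (𝓝 (p.factorial : ℝ)) := by
  have he : Tendsto (fun t : ℝ => exp (-t)) (𝓝[>] 0) (𝓝 1) := by
    have : Tendsto (fun t : ℝ => exp (-t)) (𝓝 0) (𝓝 (exp (-0))) := by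
      apply Continuous.tendsto; fun_prop
    simp only [neg_zero, Real.exp_zero] at this
    exact this.mono_left nhdsWithin_le_nhds
  have hU : Tendsto (fun t : ℝ => (p.factorial : ℝ) * exp (-t) * (t / (1 - exp (-t))) ^ (p + 1))
      (𝓝[>] 0) (𝓝 (p.factorial : ℝ)) := by
    simpa using (he.const_mul (p.factorial : ℝ)).mul (tend_aux.pow (p + 1))
  have hL : Tendsto (fun t : ℝ => (p.factorial : ℝ) * exp (-t) ^ (p + 1) * (t / (1 - exp (-t))) ^ (p + 1))
      (𝓝[>] 0) (𝓝 (p.factorial : ℝ)) := by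
    simpa using ((he.pow (p + 1)).const_mul (p.factorial : ℝ)).mul (tend_aux.pow (p + 1))
  refine tendsto_of_tendsto_of_tendsto_of_le_of_le' hL hU ?_ ?_
  · filter_upwards [self_mem_nhdsWithin] with t (ht : 0 < t)
    rw [div_pow]
    calc _ = t ^ (p + 1) * (p.factorial * exp (-t) ^ (p + 1) * (1 / (1 - exp (-t)) ^ (p + 1))) := by ring
      _ ≤ _ := mul_le_mul_of_nonneg_left (SS_lower p t ht) (by positivity)
  · filter_upwards [self_mem_nhdsWithin] with t (ht : 0 < t)
    rw [div_pow]
    calc _ ≤ t ^ (p + 1) * (p.factorial * exp (-t) * (1 / (1 - exp (-t)) ^ (p + 1))) := 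
          mul_le_mul_of_nonneg_left (SS_upper p t ht).2 (by positivity)
      _ = _ := by ring

theorem bb_zero (ℓ : ℕ) : bb ℓ 0 = 0 := by simp [bb]

theorem bb_nonneg (ℓ n : ℕ) : 0 ≤ bb ℓ n := by unfold bb; positivity

theorem bb_lower (p n : ℕ) (hn : n ≠ 0) : (n : ℝ) ^ p ≤ bb (p + 2) n := by
  have h := aa_lower (p + 1) n hn
  have h' : (n : ℝ) ^ (p + 1) ≤ aa (p + 2) n := by exact_mod_cast h
  have hn' : (0 : ℝ) < n := by positivity
  rw [bb, le_div_iff₀ hn', ← pow_succ]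
  exact h'

def MM (p j : ℕ) (t : ℝ) : ℝ := ∑' n : ℕ, bb (p + 2) n * (n : ℝ) ^ j * exp (-((n : ℝ) * t))

def Gd (p j : ℕ) (t : ℝ) (d : ℕ+) : ℝ :=
  (aa (p + 1) d : ℝ) * (1 / ((d : ℕ) : ℝ) ^ (p + 2)) *
    ((((d : ℕ) : ℝ) * t) ^ (p + j + 1) * SS (p + j) (((d : ℕ) : ℝ) * t))

theorem Gd_summable (p j : ℕ) (t : ℝ) (ht : 0 < t) : Summable (Gd p j t) := by
  have h := (aa_dirichlet (p + 1) 0).summable.mul_right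
    ((p + j).factorial * ((p + j + 1).factorial * exp 1) : ℝ)
  refine Summable.of_nonneg_of_le (fun d => ?_) (fun d => ?_) h
  · have := SS_nonneg (p + j) (((d : ℕ) : ℝ) * t)
    unfold Gd; positivity
  · unfold Gd
    have hd : (0 : ℝ) < (d : ℕ) := by exact_mod_cast d.pos
    exact mul_le_mul_of_nonneg_left (SS_bound (p + j) _ (by positivity)) (by positivity)

theorem MM_hasSum' (p j : ℕ) (t : ℝ) (ht : 0 < t) :
    HasSum (fun n : ℕ => bb (p + 2) n * (n : ℝ) ^ j * exp (-((n : ℝ) * t)))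
      (1 / t ^ (p + j + 1) * ∑' d, Gd p j t d) := by
  have hinj : Function.Injective (fun n : ℕ+ => (n : ℕ)) := PNat.coe_injective
  rw [← hinj.hasSum_iff (by
    intro n hn
    have : n = 0 := by
      by_contra h
      exact hn ⟨⟨n, Nat.pos_of_ne_zero h⟩, rfl⟩
    simp [this, bb_zero])]
  have key := conv_hasSum (p + 1) (fun n => (n : ℝ) ^ j / n * exp (-((n : ℝ) * t)))
    (1 / t ^ (p + j + 1) * ∑' d, Gd p j t d) ?_
  · convert key using 2 with n
    simp only [Function.comp, bb]
    ring
  · have hfib : ∀ d : ℕ+, HasSum (fun e : ℕ+ => (aa (p + 1) d : ℝ) * ((e : ℕ) : ℝ) ^ (p + 1) *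
      ((((d : ℕ) * (e : ℕ) : ℕ) : ℝ) ^ j / (((d : ℕ) * (e : ℕ) : ℕ) : ℝ) *
        exp (-((((d : ℕ) * (e : ℕ) : ℕ) : ℝ) * t)))) (1 / t ^ (p + j + 1) * Gd p j t d) := by
      intro d
      have hd : (0 : ℝ) < (d : ℕ) := by exact_mod_cast d.pos
      have h := (SS_hasSum (p + j) ((d : ℕ) * t) (by positivity)).mul_left
        ((aa (p + 1) d : ℝ) * ((d : ℕ) : ℝ) ^ j / (d : ℕ))
      convert h using 1
      · rfl
      · funext e
        have he : (0 : ℝ) < (e : ℕ) := by exact_mod_cast e.pos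
        push_cast
        rw [show -((((e : ℕ) : ℝ)) * (((d : ℕ) : ℝ) * t)) = -(((d : ℕ) : ℝ) * (e : ℕ) * t) by ring]
        field_simp
        ring
      · unfold Gd
        rw [mul_pow]
        field_simp
        ring
    have hsum : Summable (fun x : ℕ+ × ℕ+ => (aa (p + 1) x.1 : ℝ) * ((x.2 : ℕ) : ℝ) ^ (p + 1) *
      ((((x.1 : ℕ) * (x.2 : ℕ) : ℕ) : ℝ) ^ j / (((x.1 : ℕ) * (x.2 : ℕ) : ℕ) : ℝ) *
        exp (-((((x.1 : ℕ) * (x.2 : ℕ) : ℕ) : ℝ) * t)))) := by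
      rw [summable_prod_of_nonneg (fun x => by positivity)]
      refine ⟨fun d => (hfib d).summable, ?_⟩
      refine ((Gd_summable p j t ht).mul_left (1 / t ^ (p + j + 1))).congr fun d => ?_
      exact (hfib d).tsum_eq.symm
    have h2 := hsum.hasSum
    rw [hsum.tsum_prod' (fun d => (hfib d).summable)] at h2
    have h3 : ∑' d : ℕ+, ∑' e : ℕ+, (aa (p + 1) d : ℝ) * ((e : ℕ) : ℝ) ^ (p + 1) *
      ((((d : ℕ) * (e : ℕ) : ℕ) : ℝ) ^ j / (((d : ℕ) * (e : ℕ) : ℕ) : ℝ) *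
        exp (-((((d : ℕ) * (e : ℕ) : ℕ) : ℝ) * t))) = 1 / t ^ (p + j + 1) * ∑' d, Gd p j t d := by
      rw [← tsum_mul_left]
      exact tsum_congr fun d => (hfib d).tsum_eq
    rw [← h3]
    exact h2

theorem MM_hasSum (p j : ℕ) (t : ℝ) (ht : 0 < t) :
    HasSum (fun n : ℕ => bb (p + 2) n * (n : ℝ) ^ j * exp (-((n : ℝ) * t))) (MM p j t) :=
  (MM_hasSum' p j t ht).summable.hasSum

def ZP (p : ℕ) : ℝ := ∏ i ∈ Finset.range (p + 1), zetaR ((i + 2 : ℕ) : ℝ)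

theorem ZP_pos (p : ℕ) : 0 < ZP p := Finset.prod_pos fun i _ => zetaR_pos i

theorem MM_tendsto (p j : ℕ) : Tendsto (fun t : ℝ => t ^ (p + j + 1) * MM p j t) (𝓝[>] 0)
    (𝓝 ((p + j).factorial * ZP p)) := by
  have hd0 := aa_dirichlet (p + 1) 0
  have hZ : (∏ i ∈ Finset.range (p + 1), zetaR ((0 + i + 2 : ℕ) : ℝ)) = ZP p := by
    unfold ZP; simp
  rw [hZ] at hd0
  have h1 : Tendsto (fun t : ℝ => ∑' d, Gd p j t d) (𝓝[>] 0)
      (𝓝 (∑' d : ℕ+, (aa (p + 1) d : ℝ) * (1 / ((d : ℕ) : ℝ) ^ (p + 2)) * (p + j).factorial)) := by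
    refine tendsto_tsum_of_dominated_convergence
      (bound := fun d : ℕ+ => (aa (p + 1) d : ℝ) * (1 / ((d : ℕ) : ℝ) ^ (p + 1 + 1 + 0)) *
        ((p + j).factorial * ((p + j + 1).factorial * exp 1) : ℝ)) (hd0.summable.mul_right _) ?_ ?_
    · intro d
      have hd : (0 : ℝ) < (d : ℕ) := by exact_mod_cast d.pos
      have ht : Tendsto (fun t : ℝ => ((d : ℕ) : ℝ) * t) (𝓝[>] 0) (𝓝[>] 0) := by
        refine tendsto_nhdsWithin_iff.2 ⟨?_, ?_⟩
        · have : Tendsto (fun t : ℝ => ((d : ℕ) : ℝ) * t) (𝓝 0) (𝓝 (((d : ℕ) : ℝ) * 0)) := by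
            apply Continuous.tendsto; fun_prop
          rw [mul_zero] at this
          exact this.mono_left nhdsWithin_le_nhds
        · filter_upwards [self_mem_nhdsWithin] with t (ht : 0 < t)
          exact mul_pos hd ht
      exact ((SS_tendsto (p + j)).comp ht).const_mul _
    · filter_upwards [self_mem_nhdsWithin] with t (ht : 0 < t) d
      have hd : (0 : ℝ) < (d : ℕ) := by exact_mod_cast d.pos
      have h0 : 0 ≤ Gd p j t d := by
        have := SS_nonneg (p + j) (((d : ℕ) : ℝ) * t)
        unfold Gd; positivity
      rw [Real.norm_of_nonneg h0]
      unfold Gd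
      exact mul_le_mul_of_nonneg_left (SS_bound (p + j) _ (by positivity)) (by positivity)
  have h2 : ∑' d : ℕ+, (aa (p + 1) d : ℝ) * (1 / ((d : ℕ) : ℝ) ^ (p + 2)) * (p + j).factorial
      = (p + j).factorial * ZP p := by
    rw [tsum_mul_right, mul_comm]
    congr 1
    exact hd0.tsum_eq
  rw [h2] at h1
  refine h1.congr' ?_
  filter_upwards [self_mem_nhdsWithin] with t (ht : 0 < t)
  rw [(MM_hasSum p j t ht).unique (MM_hasSum' p j t ht)]
  field_simp

theorem Kconst_eq (p : ℕ) : Kconst (p + 2) = (p + 1).factorial * ZP p := by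
  unfold Kconst ZP
  congr 1
  rw [← Finset.Ico_add_one_right_eq_Icc, Finset.prod_Ico_eq_prod_range]
  refine Finset.prod_congr (by congr 1) fun i _ => ?_
  rw [add_comm]
end

end

section
open Filter Topology Real MeasureTheory Asymptotics

noncomputable section

theorem pow_series (b : ℕ → ℝ) (z : ℂ) (hs : Summable (fun n => ‖(b n : ℂ) * z ^ n‖)) (k : ℕ) :
    Summable (fun n => ‖((PowerSeries.coeff n ((PowerSeries.mk b) ^ k) : ℝ) : ℂ) * z ^ n‖) ∧
    ∑' n, ((PowerSeries.coeff n ((PowerSeries.mk b) ^ k) : ℝ) : ℂ) * z ^ n =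
      (∑' n, (b n : ℂ) * z ^ n) ^ k := by
  induction k with
  | zero =>
    have h : ∀ n : ℕ, n ≠ 0 → ((PowerSeries.coeff n ((PowerSeries.mk b) ^ 0) : ℝ) : ℂ) * z ^ n = 0 := by
      intro n hn
      simp [PowerSeries.coeff_one, hn]
    constructor
    · refine summable_of_ne_finset_zero (s := {0}) fun n hn => ?_
      rw [h n (by simpa using hn), norm_zero]
    · rw [tsum_eq_single 0 h]; simp
  | succ k ih =>
    have e : (fun n => ((PowerSeries.coeff n ((PowerSeries.mk b) ^ (k + 1)) : ℝ) : ℂ) * z ^ n) =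
      fun n => ∑ p ∈ Finset.HasAntidiagonal.antidiagonal n,
        (((PowerSeries.coeff p.1 ((PowerSeries.mk b) ^ k) : ℝ) : ℂ) * z ^ p.1) *
          ((b p.2 : ℂ) * z ^ p.2) := by
      funext n
      rw [pow_succ, PowerSeries.coeff_mul]
      push_cast
      rw [Finset.sum_mul]
      refine Finset.sum_congr rfl fun p hp => ?_
      rw [← Finset.HasAntidiagonal.mem_antidiagonal.1 hp, PowerSeries.coeff_mk, pow_add]
      ring
    constructor
    · have := summable_norm_sum_mul_antidiagonal_of_summable_norm ih.1 hs
      refine this.congr fun n => ?_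
      exact congrArg norm (congrFun e n).symm
    · rw [e, ← tsum_mul_tsum_eq_tsum_sum_antidiagonal_of_summable_norm ih.1 hs, ih.2, pow_succ]

theorem int_exp (m n : ℕ) : ∫ θ in (-π)..π, Complex.exp (Complex.I * m * θ) * Complex.exp (-(Complex.I * n * θ))
    = if m = n then 2 * (π : ℂ) else 0 := by
  have e : ∀ θ : ℝ, Complex.exp (Complex.I * m * θ) * Complex.exp (-(Complex.I * n * θ)) =
      Complex.exp ((Complex.I * (m - n)) * θ) := by
    intro θ; rw [← Complex.exp_add]; congr 1; ring
  simp_rw [e]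
  split_ifs with h
  · subst h
    simp
    ring
  · have hmn : (m : ℂ) - n ≠ 0 := sub_ne_zero.2 (by exact_mod_cast h)
    rw [integral_exp_mul_complex (mul_ne_zero Complex.I_ne_zero hmn)]
    have : Complex.exp (Complex.I * (m - n) * (π : ℝ)) = Complex.exp (Complex.I * (m - n) * ((-π : ℝ))) := by
      rw [Complex.exp_eq_exp_iff_exists_int]
      refine ⟨(m : ℤ) - n, ?_⟩
      push_cast; ring
    rw [this]; simp

def FF (b : ℕ → ℝ) (t θ : ℝ) : ℂ := ∑' k : ℕ, (b k : ℂ) * Complex.exp (-(k * t) + Complex.I * k * θ)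

theorem FF_term (b : ℕ → ℝ) (t θ : ℝ) (k : ℕ) : (b k : ℂ) * Complex.exp (-(k * t) + Complex.I * k * θ)
    = (b k : ℂ) * Complex.exp (-t + Complex.I * θ) ^ k := by
  rw [← Complex.exp_nat_mul]; congr 2; ring

theorem FF_term_norm (b : ℕ → ℝ) (hb : ∀ k, 0 ≤ b k) (t θ : ℝ) (k : ℕ) :
    ‖(b k : ℂ) * Complex.exp (-(k * t) + Complex.I * k * θ)‖ = b k * exp (-(k * t)) := by
  rw [norm_mul, Complex.norm_exp, Complex.norm_real, Real.norm_of_nonneg (hb k)]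
  simp

theorem FF_cont (b : ℕ → ℝ) (hb : ∀ k, 0 ≤ b k) (t : ℝ) (hs : Summable fun k : ℕ => b k * exp (-(k * t))) :
    Continuous (FF b t) := by
  unfold FF
  refine continuous_tsum (fun k => by fun_prop) hs fun k θ => ?_
  rw [FF_term_norm b hb]

theorem FF_pow_int (b : ℕ → ℝ) (hb : ∀ k, 0 ≤ b k) (t : ℝ)
    (hs : Summable fun k : ℕ => b k * exp (-(k * t))) (k n : ℕ) :
    ∫ θ in (-π)..π, FF b t θ ^ k * Complex.exp (-(Complex.I * n * θ)) =
      2 * π * exp (-(n * t)) * (PowerSeries.coeff n ((PowerSeries.mk b) ^ k) : ℝ) := by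
  set c : ℕ → ℝ := fun m => PowerSeries.coeff m ((PowerSeries.mk b) ^ k) with hc
  have hsz : ∀ θ : ℝ, Summable (fun n => ‖(b n : ℂ) * Complex.exp (-t + Complex.I * θ) ^ n‖) := by
    intro θ
    refine hs.congr fun n => ?_
    rw [← FF_term, FF_term_norm b hb]
  have hF : ∀ θ : ℝ, FF b t θ ^ k = ∑' m, (c m : ℂ) * Complex.exp (-t + Complex.I * θ) ^ m := by
    intro θ
    rw [(pow_series b _ (hsz θ) k).2]
    unfold FF
    simp_rw [FF_term]
  have hnorm : ∀ (m : ℕ) (θ : ℝ), ‖(c m : ℂ) * Complex.exp (-t + Complex.I * θ) ^ m‖ = |c m| * exp (-t) ^ m := by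
    intro m θ
    rw [norm_mul, norm_pow, Complex.norm_exp, Complex.norm_real, Real.norm_eq_abs]
    simp
  have hsc : Summable (fun m => |c m| * exp (-t) ^ m) := by
    refine ((pow_series b _ (hsz 0) k).1).congr fun m => ?_
    exact hnorm m 0
  have hcsum : ∀ θ : ℝ, HasSum (fun m => (c m : ℂ) * Complex.exp (-t + Complex.I * θ) ^ m) (FF b t θ ^ k) := by
    intro θ
    rw [hF]
    exact (pow_series b _ (hsz θ) k).1.of_norm.hasSum
  have hen : ∀ θ : ℝ, ‖Complex.exp (-(Complex.I * n * θ))‖ = 1 := by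
    intro θ; rw [Complex.norm_exp]; simp
  have key := intervalIntegral.hasSum_integral_of_dominated_convergence (μ := volume) (a := -π) (b := π)
    (F := fun m θ => (c m : ℂ) * Complex.exp (-t + Complex.I * θ) ^ m * Complex.exp (-(Complex.I * n * θ)))
    (f := fun θ => FF b t θ ^ k * Complex.exp (-(Complex.I * n * θ)))
    (bound := fun m _ => |c m| * exp (-t) ^ m)
    (fun m => Continuous.aestronglyMeasurable (by fun_prop))
    (fun m => ae_of_all _ fun θ _ => by
      rw [norm_mul, hnorm, hen, mul_one])
    (ae_of_all _ fun θ _ => hsc)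
    (intervalIntegrable_const)
    (ae_of_all _ fun θ _ => (hcsum θ).mul_right _)
  have hterm : ∀ m : ℕ, ∫ θ in (-π)..π, (c m : ℂ) * Complex.exp (-t + Complex.I * θ) ^ m * Complex.exp (-(Complex.I * n * θ))
      = if m = n then 2 * π * exp (-(n * t)) * (c n : ℂ) else 0 := by
    intro m
    have : ∀ θ : ℝ, (c m : ℂ) * Complex.exp (-t + Complex.I * θ) ^ m * Complex.exp (-(Complex.I * n * θ)) =
        ((c m : ℂ) * exp (-(m * t))) * (Complex.exp (Complex.I * m * θ) * Complex.exp (-(Complex.I * n * θ))) := by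
      intro θ
      rw [← Complex.exp_nat_mul, mul_add, Complex.exp_add]
      push_cast
      rw [show (m : ℂ) * (Complex.I * θ) = Complex.I * m * θ by ring, show (m : ℂ) * -t = -(m * t) by ring]
      ring
    simp_rw [this]
    rw [intervalIntegral.integral_const_mul, int_exp]
    split_ifs with h
    · subst h; ring
    · simp
  simp_rw [hterm] at key
  exact key.unique (hasSum_ite_eq n _)

theorem FF_norm_le (b : ℕ → ℝ) (hb : ∀ k, 0 ≤ b k) (t θ : ℝ) (hs : Summable fun k : ℕ => b k * exp (-(k * t))) :
    ‖FF b t θ‖ ≤ ∑' k : ℕ, b k * exp (-(k * t)) := by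
  unfold FF
  have := norm_tsum_le_tsum_norm (f := fun k : ℕ => (b k : ℂ) * Complex.exp (-(k * t) + Complex.I * k * θ)) (by
    simp_rw [FF_term_norm b hb]; exact hs)
  simp_rw [FF_term_norm b hb] at this
  exact this

theorem exp_int_gen (F : ℝ → ℂ) (hF : Continuous F) (B : ℝ) (hB : ∀ θ, ‖F θ‖ ≤ B) (j n : ℕ) :
    HasSum (fun k : ℕ => ∫ θ in (-π)..π, F θ ^ j * (F θ ^ k / k.factorial) * Complex.exp (-(Complex.I * n * θ)))
      (∫ θ in (-π)..π, F θ ^ j * Complex.exp (F θ) * Complex.exp (-(Complex.I * n * θ))) := by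
  have hen : ∀ θ : ℝ, ‖Complex.exp (-(Complex.I * n * θ))‖ = 1 := by
    intro θ; rw [Complex.norm_exp]; simp
  refine intervalIntegral.hasSum_integral_of_dominated_convergence
    (bound := fun k _ => B ^ j * (B ^ k / k.factorial)) ?_ ?_ ?_ ?_ ?_
  · exact fun m => Continuous.aestronglyMeasurable (by fun_prop)
  · refine fun m => ae_of_all _ fun θ _ => ?_
    rw [norm_mul, hen, mul_one, norm_mul, norm_div, norm_pow, norm_pow, Complex.norm_natCast]
    have := hB θ
    have h0 : 0 ≤ B := (norm_nonneg _).trans this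
    gcongr
  · exact ae_of_all _ fun θ _ => (Real.summable_pow_div_factorial _).mul_left _
  · exact intervalIntegrable_const
  · refine ae_of_all _ fun θ _ => ?_
    refine HasSum.mul_right _ (HasSum.mul_left _ ?_)
    rw [Complex.exp_eq_exp_ℂ]
    exact NormedSpace.expSeries_div_hasSum_exp (F θ)

theorem FF_exp_int (b : ℕ → ℝ) (hb : ∀ k, 0 ≤ b k) (t : ℝ)
    (hs : Summable fun k : ℕ => b k * exp (-(k * t))) (x : ℝ) (j n : ℕ) :
    HasSum (fun k : ℕ => (x : ℂ) ^ (k + j) / k.factorial *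
      (2 * π * exp (-(n * t)) * (PowerSeries.coeff n ((PowerSeries.mk b) ^ (k + j)) : ℝ)))
      (∫ θ in (-π)..π, (x * FF b t θ) ^ j * Complex.exp (x * FF b t θ) * Complex.exp (-(Complex.I * n * θ))) := by
  have hFc := FF_cont b hb t hs
  have hFn := fun θ => FF_norm_le b hb t θ hs
  have key := exp_int_gen (fun θ => x * FF b t θ) (by fun_prop) (|x| * ∑' k : ℕ, b k * exp (-(k * t)))
    (fun θ => by
      rw [norm_mul, Complex.norm_real, Real.norm_eq_abs]
      exact mul_le_mul_of_nonneg_left (hFn θ) (abs_nonneg _)) j n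
  refine Eq.mp (congrArg (fun f => HasSum f _) (funext fun k => ?_)) key
  rw [← FF_pow_int b hb t hs (k + j) n, ← intervalIntegral.integral_const_mul]
  congr 1
  funext θ
  rw [mul_pow, mul_pow]
  ring

def NN (ℓ n : ℕ) (x : ℝ) (j : ℕ) : ℝ :=
  ∑ k ∈ Finset.range (n + 1), (k.descFactorial j : ℝ) * (Acount ℓ n k : ℝ) * x ^ k

theorem varK_NN (ℓ n : ℕ) (x : ℝ) (h0 : NN ℓ n x 0 ≠ 0) :
    varK ℓ n x = NN ℓ n x 2 / NN ℓ n x 0 + NN ℓ n x 1 / NN ℓ n x 0 - (NN ℓ n x 1 / NN ℓ n x 0) ^ 2 := by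
  have e0 : ∑ k ∈ Finset.range (n + 1), (Acount ℓ n k : ℝ) * x ^ k = NN ℓ n x 0 := by simp [NN]
  have e1 : ∑ k ∈ Finset.range (n + 1), (k : ℝ) * (Acount ℓ n k : ℝ) * x ^ k = NN ℓ n x 1 := by simp [NN]
  have em : meanK ℓ n x = NN ℓ n x 1 / NN ℓ n x 0 := by
    unfold meanK expectK; rw [e0, e1]
  unfold varK expectK
  rw [em, e0]
  set m := NN ℓ n x 1 / NN ℓ n x 0 with hm
  have hd : ∀ k : ℕ, ((k.descFactorial 2 : ℕ) : ℝ) = (k : ℝ) ^ 2 - k := by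
    intro k
    cases k with
    | zero => simp
    | succ k => simp [Nat.descFactorial]; ring
  have e2 : ∑ k ∈ Finset.range (n + 1), ((k : ℝ) - m) ^ 2 * (Acount ℓ n k : ℝ) * x ^ k =
      NN ℓ n x 2 + (1 - 2 * m) * NN ℓ n x 1 + m ^ 2 * NN ℓ n x 0 := by
    rw [← e0, ← e1]
    unfold NN
    rw [Finset.mul_sum, Finset.mul_sum, ← Finset.sum_add_distrib, ← Finset.sum_add_distrib]
    refine Finset.sum_congr rfl fun k _ => ?_
    rw [hd]; ring
  rw [e2]
  have h1 : NN ℓ n x 1 = m * NN ℓ n x 0 := by rw [hm]; field_simp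
  rw [h1]
  field_simp
  ring

theorem coeff_pow_zero (ℓ k n : ℕ) (h : n < k) : PowerSeries.coeff n ((PowerSeries.mk (bb ℓ)) ^ k) = 0 := by
  apply PowerSeries.coeff_of_lt_order
  have h1 : (1 : ℕ∞) ≤ (PowerSeries.mk (bb ℓ)).order := by
    rw [PowerSeries.one_le_order_iff_constCoeff_eq_zero]
    simp [bb_zero]
  calc (n : ℕ∞) < k := by exact_mod_cast h
    _ = k • (1 : ℕ∞) := by simp
    _ ≤ k • (PowerSeries.mk (bb ℓ)).order := by gcongr
    _ ≤ _ := PowerSeries.le_order_pow _ _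

def EE (ℓ n : ℕ) (x t : ℝ) (j : ℕ) : ℂ :=
  ∫ θ in (-π)..π, (x * FF (bb ℓ) t θ) ^ j * Complex.exp (x * FF (bb ℓ) t θ) * Complex.exp (-(Complex.I * n * θ))

theorem EE_eq (ℓ n : ℕ) (x t : ℝ) (hs : Summable fun k : ℕ => bb ℓ k * exp (-(k * t))) (j : ℕ) :
    EE ℓ n x t j = 2 * π * exp (-(n * t)) / n.factorial * (NN ℓ n x j : ℝ) := by
  have h := FF_exp_int (bb ℓ) (bb_nonneg ℓ) t hs x j n
  refine h.unique ?_
  have hterm : ∀ k : ℕ, (x : ℂ) ^ (k + j) / k.factorial *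
      (2 * π * exp (-(n * t)) * (PowerSeries.coeff n ((PowerSeries.mk (bb ℓ)) ^ (k + j)) : ℝ)) =
      2 * π * exp (-(n * t)) / n.factorial *
        ((((k + j).descFactorial j : ℝ) * (Acount ℓ n (k + j) : ℝ) * x ^ (k + j) : ℝ) : ℂ) := by
    intro k
    have h1 := Acount_coeff ℓ (k + j) n
    have h2 : (k.factorial : ℝ) * ((k + j).descFactorial j : ℝ) = (k + j).factorial := by
      have := Nat.factorial_mul_descFactorial (Nat.le_add_left j k)
      rw [Nat.add_sub_cancel] at this
      exact_mod_cast this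
    have hn : (n.factorial : ℝ) ≠ 0 := by positivity
    have hk : (k.factorial : ℝ) ≠ 0 := by positivity
    have h3 : (PowerSeries.coeff n ((PowerSeries.mk (bb ℓ)) ^ (k + j)) : ℝ) =
        (Acount ℓ n (k + j) : ℝ) * (k.factorial * ((k + j).descFactorial j)) / n.factorial := by
      rw [h2, h1]; field_simp
    rw [h3]
    have hn' : (n.factorial : ℂ) ≠ 0 := by exact_mod_cast n.factorial_ne_zero
    have hk' : (k.factorial : ℂ) ≠ 0 := by exact_mod_cast k.factorial_ne_zero
    push_cast
    field_simp
  simp_rw [hterm]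
  refine HasSum.mul_left _ ?_
  rw [Complex.hasSum_ofReal]
  have hz : ∀ k : ℕ, k ∉ Finset.range (n + 1) → (k.descFactorial j : ℝ) * (Acount ℓ n k : ℝ) * x ^ k = 0 := by
    intro k hk
    have hk' : n < k := by simpa using hk
    have h1 := Acount_coeff ℓ k n
    rw [coeff_pow_zero ℓ k n hk', mul_zero] at h1
    have : (Acount ℓ n k : ℝ) = 0 := by
      rcases mul_eq_zero.1 h1 with h | h
      · exact h
      · exact absurd h (by positivity)
    rw [this]; ring
  have hall : HasSum (fun k : ℕ => (k.descFactorial j : ℝ) * (Acount ℓ n k : ℝ) * x ^ k) (NN ℓ n x j) :=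
    hasSum_sum_of_ne_finset_zero hz
  have hinj : Function.Injective (fun k : ℕ => k + j) := add_left_injective j
  rw [← hinj.hasSum_iff] at hall
  · exact hall
  · intro k hk
    have : k < j := by
      by_contra hlt
      exact hk ⟨k - j, by simp; omega⟩
    rw [Nat.descFactorial_of_lt this]; simp

def JJ (ℓ n : ℕ) (x t : ℝ) (j : ℕ) : ℂ :=
  ∫ θ in (-π)..π, (x * FF (bb ℓ) t θ - x * FF (bb ℓ) t 0) ^ j *
    Complex.exp (x * FF (bb ℓ) t θ - x * FF (bb ℓ) t 0 - Complex.I * n * θ)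

theorem varK_JJ (ℓ n : ℕ) (x t : ℝ) (hs : Summable fun k : ℕ => bb ℓ k * exp (-(k * t)))
    (h0 : JJ ℓ n x t 0 ≠ 0) :
    (varK ℓ n x : ℂ) = JJ ℓ n x t 2 / JJ ℓ n x t 0 + JJ ℓ n x t 1 / JJ ℓ n x t 0 + x * FF (bb ℓ) t 0
      - (JJ ℓ n x t 1 / JJ ℓ n x t 0) ^ 2 := by
  have hFc := FF_cont (bb ℓ) (bb_nonneg ℓ) t hs
  set c : ℂ := x * FF (bb ℓ) t 0 with hc
  have hint : ∀ j : ℕ, IntervalIntegrable (fun θ : ℝ => (x * FF (bb ℓ) t θ) ^ j *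
      Complex.exp (x * FF (bb ℓ) t θ) * Complex.exp (-(Complex.I * n * θ))) volume (-π) π := by
    intro j
    apply Continuous.intervalIntegrable
    fun_prop
  have hsplit : ∀ θ : ℝ, Complex.exp (x * FF (bb ℓ) t θ - c - Complex.I * n * θ) =
      Complex.exp (-c) * (Complex.exp (x * FF (bb ℓ) t θ) * Complex.exp (-(Complex.I * n * θ))) := by
    intro θ
    rw [← Complex.exp_add, ← Complex.exp_add]; congr 1; ring
  have hJ0 : JJ ℓ n x t 0 = Complex.exp (-c) * EE ℓ n x t 0 := by
    unfold JJ EE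
    rw [← intervalIntegral.integral_const_mul]
    congr 1; funext θ
    rw [hsplit]; ring
  have hJ1 : JJ ℓ n x t 1 = Complex.exp (-c) * (EE ℓ n x t 1 - c * EE ℓ n x t 0) := by
    unfold JJ EE
    rw [← intervalIntegral.integral_const_mul, ← intervalIntegral.integral_sub (hint 1) ((hint 0).const_mul c),
      ← intervalIntegral.integral_const_mul]
    congr 1; funext θ
    rw [hsplit]; ring
  have hJ2 : JJ ℓ n x t 2 = Complex.exp (-c) * (EE ℓ n x t 2 - 2 * c * EE ℓ n x t 1 + c ^ 2 * EE ℓ n x t 0) := by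
    unfold JJ EE
    rw [← intervalIntegral.integral_const_mul, ← intervalIntegral.integral_const_mul,
      ← intervalIntegral.integral_sub (hint 2) ((hint 1).const_mul (2 * c)),
      ← intervalIntegral.integral_add ((hint 2).sub ((hint 1).const_mul (2 * c))) ((hint 0).const_mul (c ^ 2)),
      ← intervalIntegral.integral_const_mul]
    congr 1; funext θ
    rw [hsplit]; ring
  set P : ℂ := 2 * π * exp (-(n * t)) / n.factorial with hP
  have hE : ∀ j, EE ℓ n x t j = P * (NN ℓ n x j : ℝ) := fun j => EE_eq ℓ n x t hs j
  have he : Complex.exp (-c) ≠ 0 := Complex.exp_ne_zero _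
  rw [hE] at hJ0
  have hP0 : P ≠ 0 := by
    intro h; rw [h] at hJ0; apply h0; rw [hJ0]; ring
  have hN0 : (NN ℓ n x 0 : ℂ) ≠ 0 := by
    intro h; rw [h] at hJ0; apply h0; rw [hJ0]; ring
  have hN0' : NN ℓ n x 0 ≠ 0 := by exact_mod_cast hN0
  rw [varK_NN ℓ n x hN0', hJ2, hJ1, hJ0, hE, hE, hE]
  push_cast
  field_simp
  ring

end

end

section
open Filter Topology Real MeasureTheory Asymptotics

noncomputable section

theorem bb_summable (p : ℕ) (t : ℝ) (ht : 0 < t) : Summable fun k : ℕ => bb (p + 2) k * exp (-(k * t)) := by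
  have := (MM_hasSum p 0 t ht).summable
  simpa using this

theorem FF_hasSum (p : ℕ) (t : ℝ) (ht : 0 < t) (θ : ℝ) :
    HasSum (fun k : ℕ => (bb (p + 2) k : ℂ) * (exp (-(k * t)) : ℝ) * Complex.exp (Complex.I * (k * θ : ℝ)))
      (FF (bb (p + 2)) t θ) := by
  have h : Summable (fun k : ℕ => (bb (p + 2) k : ℂ) * Complex.exp (-(k * t) + Complex.I * k * θ)) := by
    apply Summable.of_norm
    simp_rw [FF_term_norm _ (bb_nonneg _)]
    exact bb_summable p t ht
  convert h.hasSum using 2 with k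
  · rw [Complex.exp_add]
    push_cast
    rw [mul_assoc, show Complex.I * (k * θ) = Complex.I * k * θ by ring]
  · rfl

theorem MM_hasSumC (p j : ℕ) (t : ℝ) (ht : 0 < t) :
    HasSum (fun k : ℕ => (bb (p + 2) k : ℂ) * (exp (-(k * t)) : ℝ) * (k : ℂ) ^ j) (MM p j t : ℂ) := by
  have := (Complex.hasSum_ofReal).2 (MM_hasSum p j t ht)
  refine Eq.mp (congrArg (fun f => HasSum f _) (funext fun k => ?_)) this
  push_cast; ring

theorem FF_zero (p : ℕ) (t : ℝ) (ht : 0 < t) : FF (bb (p + 2)) t 0 = (MM p 0 t : ℂ) := by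
  have h1 := FF_hasSum p t ht 0
  have h2 := MM_hasSumC p 0 t ht
  refine h1.unique (Eq.mp (congrArg (fun f => HasSum f _) (funext fun k => ?_)) h2)
  simp

theorem exp2 (y : ℝ) : ‖Complex.exp (Complex.I * y) - 1 - Complex.I * y‖ ≤ 3 * |y| ^ 2 := by
  have hn : ‖Complex.I * (y : ℂ)‖ = |y| := by simp
  by_cases h : |y| ≤ 1
  · have := Complex.norm_exp_sub_one_sub_id_le (x := Complex.I * y) (by rw [hn]; exact h)
    rw [hn] at this
    nlinarith [sq_nonneg |y|]
  · push Not at h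
    have h1 : ‖Complex.exp (Complex.I * y) - 1‖ ≤ |y| := by
      simpa using Real.norm_exp_I_mul_ofReal_sub_one_le (x := y)
    calc _ ≤ ‖Complex.exp (Complex.I * y) - 1‖ + ‖Complex.I * (y : ℂ)‖ := norm_sub_le _ _
      _ ≤ |y| + |y| := by rw [hn]; gcongr
      _ ≤ _ := by nlinarith

theorem exp3 (y : ℝ) : ‖Complex.exp (Complex.I * y) - 1 - Complex.I * y + y ^ 2 / 2‖ ≤ 4 * |y| ^ 3 := by
  have hn : ‖Complex.I * (y : ℂ)‖ = |y| := by simp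
  by_cases h : |y| ≤ 1
  · have := Complex.exp_bound (x := Complex.I * y) (by rw [hn]; exact h) (n := 3) (by norm_num)
    rw [hn] at this
    simp only [Finset.sum_range_succ, Finset.sum_range_zero] at this
    have e : Complex.exp (Complex.I * y) - (0 + (Complex.I * y) ^ 0 / (Nat.factorial 0 : ℕ) +
      (Complex.I * y) ^ 1 / (Nat.factorial 1 : ℕ) + (Complex.I * y) ^ 2 / (Nat.factorial 2 : ℕ)) =
      Complex.exp (Complex.I * y) - 1 - Complex.I * y + y ^ 2 / 2 := by
      rw [mul_pow _ _ 2, Complex.I_sq]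
      norm_num [Nat.factorial]
      ring
    rw [e] at this
    refine this.trans ?_
    rw [mul_comm]
    gcongr
    norm_num [Nat.factorial]
  · push Not at h
    have h1 := exp2 y
    have h2 : ‖((y : ℂ)) ^ 2 / 2‖ = |y| ^ 2 / 2 := by simp
    calc _ ≤ ‖Complex.exp (Complex.I * y) - 1 - Complex.I * y‖ + ‖((y : ℂ)) ^ 2 / 2‖ := norm_add_le _ _
      _ ≤ 3 * |y| ^ 2 + |y| ^ 2 / 2 := by rw [h2]; gcongr
      _ ≤ _ := by nlinarith [sq_nonneg |y|]

theorem FF_gen (p j : ℕ) (t : ℝ) (ht : 0 < t) (θ C : ℝ) (f : ℕ → ℂ) (S : ℂ)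
    (h : HasSum (fun k : ℕ => (bb (p + 2) k : ℂ) * (exp (-(k * t)) : ℝ) * f k) S)
    (hf : ∀ k : ℕ, ‖f k‖ ≤ C * |k * θ| ^ j) : ‖S‖ ≤ C * |θ| ^ j * MM p j t := by
  refine h.norm_le_of_bounded ((MM_hasSum p j t ht).mul_left (C * |θ| ^ j)) fun k => ?_
  rw [norm_mul, norm_mul, Complex.norm_real, Complex.norm_real, Real.norm_of_nonneg (bb_nonneg _ _),
    Real.norm_of_nonneg (exp_pos _).le]
  have h1 := bb_nonneg (p + 2) k
  calc bb (p + 2) k * exp (-(k * t)) * ‖f k‖ ≤ bb (p + 2) k * exp (-(k * t)) * (C * |k * θ| ^ j) := by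
        gcongr; exact hf k
    _ = _ := by rw [abs_mul, mul_pow, Nat.abs_cast]; ring

theorem FF_sub1 (p : ℕ) (t : ℝ) (ht : 0 < t) (θ : ℝ) :
    ‖FF (bb (p + 2)) t θ - MM p 0 t‖ ≤ |θ| * MM p 1 t := by
  have h := FF_gen p 1 t ht θ 1 (fun k => Complex.exp (Complex.I * (k * θ : ℝ)) - 1)
    (FF (bb (p + 2)) t θ - MM p 0 t) ?_ ?_
  · simpa using h
  · refine Eq.mp (congrArg (fun f => HasSum f _) (funext fun k => ?_))
      ((FF_hasSum p t ht θ).sub (MM_hasSumC p 0 t ht))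
    ring
  · intro k
    have := Real.norm_exp_I_mul_ofReal_sub_one_le (x := k * θ)
    rw [Real.norm_eq_abs] at this
    rw [one_mul, pow_one]
    exact this

theorem FF_sub2 (p : ℕ) (t : ℝ) (ht : 0 < t) (θ : ℝ) :
    ‖FF (bb (p + 2)) t θ - MM p 0 t - Complex.I * θ * MM p 1 t‖ ≤ 3 * |θ| ^ 2 * MM p 2 t := by
  refine FF_gen p 2 t ht θ 3 (fun k => Complex.exp (Complex.I * (k * θ : ℝ)) - 1 - Complex.I * (k * θ : ℝ))
    _ ?_ (fun k => exp2 _)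
  refine Eq.mp (congrArg (fun f => HasSum f _) (funext fun k => ?_))
      (((FF_hasSum p t ht θ).sub (MM_hasSumC p 0 t ht)).sub ((MM_hasSumC p 1 t ht).mul_left (Complex.I * θ)))
  push_cast
  ring

theorem FF_sub3 (p : ℕ) (t : ℝ) (ht : 0 < t) (θ : ℝ) :
    ‖FF (bb (p + 2)) t θ - MM p 0 t - Complex.I * θ * MM p 1 t + θ ^ 2 / 2 * MM p 2 t‖
      ≤ 4 * |θ| ^ 3 * MM p 3 t := by
  refine FF_gen p 3 t ht θ 4 (fun k => Complex.exp (Complex.I * (k * θ : ℝ)) - 1 - Complex.I * (k * θ : ℝ)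
    + (k * θ : ℝ) ^ 2 / 2) _ ?_ (fun k => exp3 _)
  refine Eq.mp (congrArg (fun f => HasSum f _) (funext fun k => ?_))
      ((((FF_hasSum p t ht θ).sub (MM_hasSumC p 0 t ht)).sub ((MM_hasSumC p 1 t ht).mul_left (Complex.I * θ))).add
        ((MM_hasSumC p 2 t ht).mul_left ((θ : ℂ) ^ 2 / 2)))
  push_cast
  ring

def DD (p : ℕ) (t θ : ℝ) : ℝ := MM p 0 t - (FF (bb (p + 2)) t θ).re

theorem DD_hasSum (p : ℕ) (t : ℝ) (ht : 0 < t) (θ : ℝ) :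
    HasSum (fun k : ℕ => bb (p + 2) k * exp (-(k * t)) * (1 - cos (k * θ))) (DD p t θ) := by
  have h1 := Complex.hasSum_re (FF_hasSum p t ht θ)
  have h2 := (MM_hasSum p 0 t ht).sub h1
  refine Eq.mp (congrArg (fun f => HasSum f _) (funext fun k => ?_)) h2
  rw [← Complex.ofReal_mul, Complex.re_ofReal_mul, mul_comm Complex.I, Complex.exp_ofReal_mul_I_re]
  ring

theorem DD_nonneg (p : ℕ) (t : ℝ) (ht : 0 < t) (θ : ℝ) : 0 ≤ DD p t θ := by
  refine (DD_hasSum p t ht θ).nonneg fun k => ?_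
  have := bb_nonneg (p + 2) k
  have h2 := Real.cos_le_one (k * θ)
  have : 0 ≤ 1 - cos (k * θ) := by linarith
  positivity

theorem tail_hasSum (t : ℝ) (ht : 0 < t) (θ : ℝ) (k0 : ℕ) :
    HasSum (fun m : ℕ => exp (-((m + k0 : ℕ) * t)) * (1 - cos ((m + k0 : ℕ) * θ)))
      (exp (-(k0 * t)) * (1 / (1 - exp (-t))) -
        (Complex.exp (k0 * (-t + θ * Complex.I)) * (1 - Complex.exp (-t + θ * Complex.I))⁻¹).re) := by
  have hq1 : exp (-t) < 1 := by rw [Real.exp_lt_one_iff]; linarith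
  have hz : ‖Complex.exp (-t + θ * Complex.I)‖ < 1 := by
    rw [Complex.norm_exp]; simpa using ht
  have h1 := (hasSum_geometric_of_norm_lt_one hz).mul_left (Complex.exp (k0 * (-t + θ * Complex.I)))
  have h2 := Complex.hasSum_re h1
  have h3 := (hasSum_geometric_of_lt_one (exp_pos (-t)).le hq1).mul_left (exp (-(k0 * t)))
  rw [one_div]
  refine Eq.mp (congrArg (fun f => HasSum f _) (funext fun m => ?_)) (h3.sub h2)
  rw [← Complex.exp_nat_mul, ← Complex.exp_add, ← Real.exp_nat_mul, ← Real.exp_add]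
  rw [Complex.exp_re]
  have e1 : (k0 * (-t + θ * Complex.I) + m * (-t + θ * Complex.I) : ℂ).re = -((m + k0 : ℕ) * t) := by
    simp; ring
  have e2 : (k0 * (-t + θ * Complex.I) + m * (-t + θ * Complex.I) : ℂ).im = (m + k0 : ℕ) * θ := by
    simp; ring
  rw [e1, e2, show -(k0 * t) + m * -t = -((m + k0 : ℕ) * t) by push_cast; ring]
  ring

theorem norm_one_sub (t θ : ℝ) : ‖1 - Complex.exp (-t + θ * Complex.I)‖ ^ 2 =
    (1 - exp (-t)) ^ 2 + 2 * exp (-t) * (1 - cos θ) := by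
  rw [Complex.sq_norm, Complex.normSq_apply]
  have e1 : (Complex.exp (-t + θ * Complex.I)).re = exp (-t) * cos θ := by
    rw [Complex.exp_re]; simp
  have e2 : (Complex.exp (-t + θ * Complex.I)).im = exp (-t) * sin θ := by
    rw [Complex.exp_im]; simp
  simp only [Complex.sub_re, Complex.sub_im, Complex.one_re, Complex.one_im, e1, e2]
  linear_combination exp (-t) ^ 2 * Real.sin_sq_add_cos_sq θ

theorem ab_ineq (a b : ℝ) (ha : 0 < a) (hab : a ≤ b) : (b ^ 2 - a ^ 2) / (2 * a * b ^ 2) ≤ 1 / a - 1 / b := by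
  have hb : 0 < b := by linarith
  rw [div_sub_div _ _ ha.ne' hb.ne', div_le_div_iff₀ (by positivity) (by positivity)]
  have : 0 ≤ a * b * (b - a) ^ 2 := by positivity
  nlinarith

theorem DD_lower (p : ℕ) : ∃ c > 0, ∀ t θ : ℝ, 0 < t → t ≤ 1 → |θ| ≤ π →
    c * (1 / t ^ (p + 1)) * (θ ^ 2 / (t ^ 2 + θ ^ 2)) ≤ DD p t θ := by
  set c1 : ℝ := 4 * exp (-1) / π ^ 2 with hc1
  have hc1pos : 0 < c1 := by positivity
  have hc1le : c1 ≤ 1 := by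
    rw [hc1, div_le_one (by positivity)]
    have h1 : exp (-1) ≤ 1 := Real.exp_le_one_iff.2 (by norm_num)
    nlinarith [Real.pi_gt_three]
  refine ⟨exp (-2) * (c1 / 2), by positivity, ?_⟩
  intro t θ ht ht1 hθ
  set k0 := ⌈1 / t⌉₊ with hk0
  have hk0l : 1 / t ≤ k0 := Nat.le_ceil _
  have hk0u : (k0 : ℝ) < 1 / t + 1 := Nat.ceil_lt_add_one (by positivity)
  have hk0pos : 0 < k0 := Nat.ceil_pos.2 (by positivity)
  set a := 1 - exp (-t) with ha
  set q := exp (-t) with hq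
  set b := ‖1 - Complex.exp (-t + θ * Complex.I)‖ with hb
  have ha0 : 0 < a := by
    have hq1 : exp (-t) < 1 := by rw [Real.exp_lt_one_iff]; linarith
    rw [ha]; linarith
  have hat : a ≤ t := by rw [ha]; linarith [Real.one_sub_le_exp_neg t]
  set w := 2 * q * (1 - cos θ) with hw
  have hb2 : b ^ 2 = a ^ 2 + w := norm_one_sub t θ
  have hwl : c1 * θ ^ 2 ≤ w := by
    have h1 := Real.cos_le_one_sub_mul_cos_sq hθ
    have h2 : exp (-1) ≤ q := Real.exp_le_exp.2 (by linarith)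
    calc c1 * θ ^ 2 = 2 * exp (-1) * (2 / π ^ 2 * θ ^ 2) := by rw [hc1]; ring
      _ ≤ 2 * q * (2 / π ^ 2 * θ ^ 2) := by gcongr
      _ ≤ _ := by rw [hw]; gcongr; linarith
  have hw0 : 0 ≤ w := le_trans (by positivity) hwl
  have hab : a ≤ b := by
    apply le_of_sq_le_sq _ (norm_nonneg _)
    rw [hb2]; linarith
  have hb0 : 0 < b := by linarith
  have hqk : exp (-2) ≤ exp (-(k0 * t)) := by
    apply Real.exp_le_exp.2
    have : (k0 : ℝ) * t < (1 / t + 1) * t := by gcongr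
    have h2 : (1 / t + 1) * t = 1 + t := by field_simp
    linarith
  have hT := tail_hasSum t ht θ k0
  set T := exp (-(k0 * t)) * (1 / (1 - exp (-t))) -
        (Complex.exp (k0 * (-t + θ * Complex.I)) * (1 - Complex.exp (-t + θ * Complex.I))⁻¹).re with hTdef
  have hTl : exp (-(k0 * t)) * (1 / a - 1 / b) ≤ T := by
    have h1 : (Complex.exp (k0 * (-t + θ * Complex.I)) * (1 - Complex.exp (-t + θ * Complex.I))⁻¹).re ≤
        exp (-(k0 * t)) * (1 / b) := by
      refine (Complex.re_le_norm _).trans ?_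
      rw [norm_mul, norm_inv, Complex.norm_exp, ← hb, one_div]
      apply le_of_eq
      congr 2
      simp
    rw [hTdef]; rw [← hq, ← ha]; linarith
  have hDT : (1 / t) ^ p * T ≤ DD p t θ := by
    have h1 := hT.mul_left ((1 / t) ^ p)
    have h2 := DD_hasSum p t ht θ
    rw [← h1.tsum_eq, ← h2.tsum_eq]
    refine Summable.tsum_le_tsum_of_inj (fun m => m + k0) (add_left_injective k0) ?_ ?_ h1.summable h2.summable
    · intro k _
      have := bb_nonneg (p + 2) k
      have : 0 ≤ 1 - cos (k * θ) := by linarith [Real.cos_le_one (k * θ)]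
      positivity
    · intro m
      have h0 : 0 ≤ 1 - cos ((m + k0 : ℕ) * θ) := by linarith [Real.cos_le_one ((m + k0 : ℕ) * θ)]
      have h3 : (1 / t) ^ p ≤ bb (p + 2) (m + k0) := by
        refine le_trans ?_ (bb_lower p (m + k0) (by omega))
        have : 1 / t ≤ ((m + k0 : ℕ) : ℝ) := by push_cast; linarith [(Nat.cast_nonneg m : (0:ℝ) ≤ m)]
        gcongr
      rw [← mul_assoc]
      gcongr
  refine le_trans ?_ hDT
  have hfrac : c1 * (θ ^ 2 / (t ^ 2 + θ ^ 2)) ≤ w / b ^ 2 := by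
    rw [hb2, ← mul_div_assoc, div_le_div_iff₀ (by positivity) (by positivity)]
    have h1 : c1 * θ ^ 2 * a ^ 2 ≤ w * t ^ 2 := by gcongr
    have h2 : c1 * (θ ^ 2 * w) ≤ 1 * (θ ^ 2 * w) := by gcongr
    nlinarith
  have hR : exp (-2) * (1 / (2 * t) * (c1 * (θ ^ 2 / (t ^ 2 + θ ^ 2)))) ≤ T := by
    refine le_trans ?_ hTl
    have h1 := ab_ineq a b ha0 hab
    have h2 : 1 / (2 * t) * (c1 * (θ ^ 2 / (t ^ 2 + θ ^ 2))) ≤ 1 / a - 1 / b := by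
      refine le_trans ?_ h1
      rw [show b ^ 2 - a ^ 2 = w by linarith, show w / (2 * a * b ^ 2) = 1 / (2 * a) * (w / b ^ 2) by field_simp]
      gcongr
    have h3 : 0 ≤ 1 / (2 * t) * (c1 * (θ ^ 2 / (t ^ 2 + θ ^ 2))) := by positivity
    gcongr
  calc _ = (1 / t) ^ p * (exp (-2) * (1 / (2 * t) * (c1 * (θ ^ 2 / (t ^ 2 + θ ^ 2))))) := by
        rw [one_div_pow, pow_succ]; field_simp
    _ ≤ _ := by gcongr
end

end

section
open Filter Topology Real MeasureTheory Asymptotics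

noncomputable section

theorem MM_pos_aux (p j : ℕ) : ∀ᶠ t in 𝓝[>] (0:ℝ), 0 < MM p j t := by
  have h := MM_tendsto p j
  have hp : (0 : ℝ) < (p + j).factorial * ZP p := mul_pos (by positivity) (ZP_pos p)
  filter_upwards [h.eventually (lt_mem_nhds hp), self_mem_nhdsWithin] with t h1 (h2 : 0 < t)
  exact pos_of_mul_pos_right h1 (by positivity)

theorem dom_aux (p : ℕ) (x : ℝ) (hx : 0 < x) : ∃ C > 0, ∀ᶠ t in 𝓝[>] (0:ℝ), ∀ θ : ℝ, |θ| ≤ π →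
    1 + θ ^ 2 * (x * MM p 2 t) ≤ C * (1 + x * DD p t θ) ^ 3 := by
  obtain ⟨c, hc, hD⟩ := DD_lower p
  set v0 : ℝ := (p + 2).factorial * ZP p with hv0
  have hv0p : 0 < v0 := mul_pos (by positivity) (ZP_pos p)
  have hV := MM_tendsto p 2
  refine ⟨1 + 4 * v0 / c + 2 * π ^ 2 * v0 * x * (2 / (x * c)) ^ 3, by positivity, ?_⟩
  have ht1 : ∀ᶠ t in 𝓝[>] (0:ℝ), t < 1 := (gt_mem_nhds one_pos).filter_mono nhdsWithin_le_nhds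
  filter_upwards [hV.eventually (gt_mem_nhds (show v0 < 2 * v0 by linarith)), ht1, self_mem_nhdsWithin,
    MM_pos_aux p 2] with t hVt ht1 (ht : 0 < t) hMpos θ hθ
  have hz := mul_le_mul_of_nonneg_left (hD t θ ht ht1.le hθ) hx.le
  have hz0 := mul_nonneg hx.le (DD_nonneg p t ht θ)
  set z := x * DD p t θ with hzdef
  have hVle : MM p 2 t ≤ 2 * v0 * (1 / t ^ (p + 3)) := by
    rw [mul_one_div, le_div_iff₀ (by positivity)]
    have : p + 2 + 1 = p + 3 := rfl
    rw [this] at hVt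
    linarith
  have hcube1 : 1 ≤ (1 + z) ^ 3 := one_le_pow₀ (by linarith)
  have hcubez : z ≤ (1 + z) ^ 3 := by nlinarith [sq_nonneg z, mul_nonneg hz0 (sq_nonneg z)]
  have hcubez3 : z ^ 3 ≤ (1 + z) ^ 3 := by gcongr; linarith
  rcases le_total (θ ^ 2) (t ^ 2) with hcase | hcase
  · have h1 : θ ^ 2 / (2 * t ^ 2) ≤ θ ^ 2 / (t ^ 2 + θ ^ 2) := by
      gcongr; linarith
    have h2 : x * (c * (1 / t ^ (p + 1)) * (θ ^ 2 / (2 * t ^ 2))) ≤ z := by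
      refine le_trans ?_ hz; gcongr
    have h3 : θ ^ 2 * (x * MM p 2 t) ≤ 4 * v0 / c * z := by
      calc θ ^ 2 * (x * MM p 2 t) ≤ θ ^ 2 * (x * (2 * v0 * (1 / t ^ (p + 3)))) := by gcongr
        _ = 4 * v0 / c * (x * (c * (1 / t ^ (p + 1)) * (θ ^ 2 / (2 * t ^ 2)))) := by
          field_simp; ring
        _ ≤ _ := by gcongr
    have h4 : 4 * v0 / c * z ≤ 4 * v0 / c * (1 + z) ^ 3 := by gcongr
    have h5 : 0 ≤ 2 * π ^ 2 * v0 * x * (2 / (x * c)) ^ 3 * (1 + z) ^ 3 := by positivity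
    nlinarith
  · have h1 : 1 / 2 ≤ θ ^ 2 / (t ^ 2 + θ ^ 2) := by
      have : 0 < t ^ 2 := by positivity
      rw [div_le_div_iff₀ (by norm_num) (by positivity)]; linarith
    have h2 : x * (c * (1 / t ^ (p + 1)) * (1 / 2)) ≤ z := by
      refine le_trans ?_ hz; gcongr
    have h2' : 1 / t ^ (p + 1) ≤ 2 / (x * c) * z := by
      calc 1 / t ^ (p + 1) = 2 / (x * c) * (x * (c * (1 / t ^ (p + 1)) * (1 / 2))) := by field_simp
        _ ≤ _ := by gcongr
    have h3 : θ ^ 2 ≤ π ^ 2 := by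
      rw [← sq_abs]; gcongr
    have h4 : 1 / t ^ (p + 3) ≤ (1 / t ^ (p + 1)) ^ 3 := by
      rw [one_div_pow, ← pow_mul]
      apply one_div_le_one_div_of_le (by positivity)
      exact pow_le_pow_of_le_one ht.le ht1.le (by omega)
    have h5 : θ ^ 2 * (x * MM p 2 t) ≤ 2 * π ^ 2 * v0 * x * (2 / (x * c)) ^ 3 * z ^ 3 := by
      calc θ ^ 2 * (x * MM p 2 t) ≤ π ^ 2 * (x * (2 * v0 * (1 / t ^ (p + 3)))) := by gcongr
        _ ≤ π ^ 2 * (x * (2 * v0 * (2 / (x * c) * z) ^ 3)) := by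
          gcongr
          refine h4.trans ?_
          gcongr
        _ = _ := by ring
    have h6 : 2 * π ^ 2 * v0 * x * (2 / (x * c)) ^ 3 * z ^ 3 ≤
        2 * π ^ 2 * v0 * x * (2 / (x * c)) ^ 3 * (1 + z) ^ 3 := by gcongr
    have h7 : 0 ≤ 4 * v0 / c * (1 + z) ^ 3 := by positivity
    nlinarith

theorem dom_exp (p : ℕ) (x : ℝ) (hx : 0 < x) : ∃ C > 0, ∀ᶠ t in 𝓝[>] (0:ℝ), ∀ θ : ℝ, |θ| ≤ π →
    exp (-(x * DD p t θ)) * (1 + θ ^ 2 * (x * MM p 2 t)) ^ 2 ≤ C := by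
  obtain ⟨C, hC, h⟩ := dom_aux p x hx
  refine ⟨C ^ 2 * ((6 : ℕ).factorial * exp 1), by positivity, ?_⟩
  filter_upwards [h, self_mem_nhdsWithin, MM_pos_aux p 2] with t h (ht : 0 < t) hM θ hθ
  have h1 := h θ hθ
  have hz0 := mul_nonneg hx.le (DD_nonneg p t ht θ)
  set z := x * DD p t θ with hzdef
  have h2 : (1 + z) ^ 6 ≤ (6 : ℕ).factorial * exp (1 + z) := by
    have := Real.pow_div_factorial_le_exp (1 + z) (by linarith) 6
    rw [div_le_iff₀ (by positivity)] at this
    linarith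
  calc exp (-z) * (1 + θ ^ 2 * (x * MM p 2 t)) ^ 2 ≤ exp (-z) * (C * (1 + z) ^ 3) ^ 2 := by
        gcongr
    _ = C ^ 2 * (exp (-z) * (1 + z) ^ 6) := by ring
    _ ≤ C ^ 2 * (exp (-z) * ((6 : ℕ).factorial * exp (1 + z))) := by gcongr
    _ = _ := by
      rw [Real.exp_add, Real.exp_neg]; field_simp

def Nf (p : ℕ) (x t : ℝ) : ℝ := x * MM p 1 t
def Vf (p : ℕ) (x t : ℝ) : ℝ := x * MM p 2 t
def Wf (p : ℕ) (x t : ℝ) : ℝ := x * MM p 3 t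
def Af (p : ℕ) (x t : ℝ) : ℝ := √(Nf p x t * t)

theorem pow_atTop (k : ℕ) (c : ℝ) (hc : 0 < c) (f : ℝ → ℝ)
    (h : Tendsto (fun t : ℝ => t ^ (k + 1) * f t) (𝓝[>] 0) (𝓝 c)) : Tendsto f (𝓝[>] 0) atTop := by
  have h1 : Tendsto (fun t : ℝ => (t ^ (k + 1))⁻¹) (𝓝[>] 0) atTop := by
    apply Tendsto.inv_tendsto_nhdsGT_zero
    refine tendsto_nhdsWithin_iff.2 ⟨?_, ?_⟩
    · have : Tendsto (fun t : ℝ => t ^ (k + 1)) (𝓝 0) (𝓝 (0 ^ (k + 1))) := by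
        apply Continuous.tendsto; fun_prop
      rw [zero_pow (by omega)] at this
      exact this.mono_left nhdsWithin_le_nhds
    · filter_upwards [self_mem_nhdsWithin] with t (ht : 0 < t)
      exact pow_pos ht _
  refine (h1.atTop_mul_pos hc h).congr' ?_
  filter_upwards [self_mem_nhdsWithin] with t (ht : 0 < t)
  field_simp

theorem Mx_tendsto (p j : ℕ) (x : ℝ) : Tendsto (fun t : ℝ => t ^ (p + j + 1) * (x * MM p j t)) (𝓝[>] 0)
    (𝓝 (x * ((p + j).factorial * ZP p))) := by
  refine ((MM_tendsto p j).const_mul x).congr fun t => ?_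
  ring

theorem Vf_atTop (p : ℕ) (x : ℝ) (hx : 0 < x) : Tendsto (Vf p x) (𝓝[>] 0) atTop :=
  pow_atTop (p + 2) _ (mul_pos hx (mul_pos (by positivity) (ZP_pos p))) _ (Mx_tendsto p 2 x)

theorem Nt_atTop (p : ℕ) (x : ℝ) (hx : 0 < x) : Tendsto (fun t => Nf p x t * t) (𝓝[>] 0) atTop := by
  refine pow_atTop p _ (mul_pos hx (mul_pos (by positivity) (ZP_pos p))) _
    ((Mx_tendsto p 1 x).congr fun t => ?_)
  unfold Nf; ring

theorem Af_atTop (p : ℕ) (x : ℝ) (hx : 0 < x) : Tendsto (Af p x) (𝓝[>] 0) atTop :=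
  Real.tendsto_sqrt_atTop.comp (Nt_atTop p x hx)

theorem NVt_tendsto (p : ℕ) (x : ℝ) (hx : 0 < x) :
    Tendsto (fun t => Nf p x t / (Vf p x t * t)) (𝓝[>] 0) (𝓝 (1 / ((p : ℝ) + 2))) := by
  have hZ := ZP_pos p
  have h := (Mx_tendsto p 1 x).div (Mx_tendsto p 2 x) (by positivity)
  have e : x * ((p + 1).factorial * ZP p) / (x * ((p + 2).factorial * ZP p)) = 1 / ((p : ℝ) + 2) := by
    rw [Nat.factorial_succ (p + 1)]
    push_cast
    field_simp
    ring
  rw [e] at h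
  refine h.congr' ?_
  filter_upwards [self_mem_nhdsWithin, MM_pos_aux p 2] with t (ht : 0 < t) hM
  simp only [Pi.div_apply]
  unfold Nf Vf
  field_simp
  ring

theorem ratio_tendsto (p : ℕ) (x : ℝ) (hx : 0 < x) :
    Tendsto (fun t => Nf p x t / (Af p x t * √(Vf p x t))) (𝓝[>] 0) (𝓝 (√(1 / ((p : ℝ) + 2)))) := by
  refine ((Real.continuous_sqrt.tendsto _).comp (NVt_tendsto p x hx)).congr' ?_
  filter_upwards [self_mem_nhdsWithin, MM_pos_aux p 2, MM_pos_aux p 1] with t (ht : 0 < t) hM hM1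
  have hN : 0 < Nf p x t := mul_pos hx hM1
  have hV : 0 < Vf p x t := mul_pos hx hM
  simp only [Function.comp]
  unfold Af
  rw [Real.sqrt_div hN.le, Real.sqrt_mul hV.le, Real.sqrt_mul hN.le]
  have h1 := Real.mul_self_sqrt hN.le
  have h2 : 0 < √(Nf p x t) := Real.sqrt_pos.2 hN
  have h3 : 0 < √(Vf p x t) := Real.sqrt_pos.2 hV
  have h4 : 0 < √t := Real.sqrt_pos.2 ht
  rw [div_eq_div_iff (by positivity) (by positivity)]
  linear_combination √(Vf p x t) * √t * h1

theorem WV_tendsto (p : ℕ) (x : ℝ) (hx : 0 < x) :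
    Tendsto (fun t => Wf p x t / √(Vf p x t) ^ 3) (𝓝[>] 0) (𝓝 0) := by
  have hZ := ZP_pos p
  have h := ((Mx_tendsto p 3 x).pow 2).div ((Mx_tendsto p 2 x).pow 3) (by positivity)
  have h0 : Tendsto (fun t : ℝ => t ^ (p + 1)) (𝓝[>] 0) (𝓝 0) := by
    have : Tendsto (fun t : ℝ => t ^ (p + 1)) (𝓝 0) (𝓝 (0 ^ (p + 1))) := by
      apply Continuous.tendsto; fun_prop
    rw [zero_pow (by omega)] at this
    exact this.mono_left nhdsWithin_le_nhds
  have h1 := h.mul h0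
  rw [mul_zero] at h1
  have h2 := (Real.continuous_sqrt.tendsto _).comp h1
  rw [Real.sqrt_zero] at h2
  refine h2.congr' ?_
  filter_upwards [self_mem_nhdsWithin, MM_pos_aux p 2, MM_pos_aux p 3] with t (ht : 0 < t) hM hM3
  have hW : 0 < Wf p x t := mul_pos hx hM3
  have hV : 0 < Vf p x t := mul_pos hx hM
  simp only [Function.comp, Pi.div_apply]
  have h3 : 0 < √(Vf p x t) := Real.sqrt_pos.2 hV
  rw [Real.sqrt_eq_iff_mul_self_eq (by unfold Wf Vf at *; positivity) (by positivity)]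
  have h4 : √(Vf p x t) ^ 6 = Vf p x t ^ 3 := by
    rw [show √(Vf p x t) ^ 6 = (√(Vf p x t) ^ 2) ^ 3 by ring, Real.sq_sqrt hV.le]
  have h5 : Wf p x t / √(Vf p x t) ^ 3 * (Wf p x t / √(Vf p x t) ^ 3) = Wf p x t ^ 2 / Vf p x t ^ 3 := by
    rw [← h4]; field_simp
  rw [h5]
  unfold Wf Vf
  field_simp
  ring
end

end

section
open Filter Topology Real MeasureTheory Asymptotics

noncomputable section

def gg (p : ℕ) (x t θ : ℝ) : ℂ := x * FF (bb (p + 2)) t θ - x * (MM p 0 t : ℝ)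

def Psi (p : ℕ) (x : ℝ) (j : ℕ) (t u : ℝ) : ℂ :=
  (gg p x t (u / √(Vf p x t)) / (Af p x t : ℝ)) ^ j *
    Complex.exp (gg p x t (u / √(Vf p x t)) - Complex.I * (Nf p x t : ℝ) * (u / √(Vf p x t) : ℝ))

def Phi (p : ℕ) (x : ℝ) (j : ℕ) (t u : ℝ) : ℂ :=
  Set.indicator (Set.Ioc (-(π * √(Vf p x t))) (π * √(Vf p x t))) (Psi p x j t) u

theorem gg_cont (p : ℕ) (x t : ℝ) (ht : 0 < t) : Continuous (gg p x t) := by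
  have := FF_cont (bb (p + 2)) (bb_nonneg _) t (bb_summable p t ht)
  unfold gg; fun_prop

theorem Psi_cont (p : ℕ) (x : ℝ) (j : ℕ) (t : ℝ) (ht : 0 < t) : Continuous (Psi p x j t) := by
  have := gg_cont p x t ht
  unfold Psi; fun_prop

theorem JJ_Phi (p : ℕ) (x : ℝ) (j n : ℕ) (t : ℝ) (ht : 0 < t) (hV : 0 < Vf p x t)
    (hA : 0 < Af p x t) (hn : Nf p x t = n) :
    JJ (p + 2) n x t j = (1 / √(Vf p x t) : ℝ) * (Af p x t : ℂ) ^ j * ∫ u, Phi p x j t u := by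
  have hs : 0 < √(Vf p x t) := Real.sqrt_pos.2 hV
  have hA' : (Af p x t : ℂ) ≠ 0 := by exact_mod_cast hA.ne'
  have hs' : (√(Vf p x t) : ℂ) ≠ 0 := by exact_mod_cast hs.ne'
  unfold Phi
  rw [MeasureTheory.integral_indicator measurableSet_Ioc,
    ← intervalIntegral.integral_of_le (by have := Real.pi_pos; nlinarith [mul_pos Real.pi_pos hs])]
  have h := intervalIntegral.integral_comp_div
    (f := fun θ : ℝ => (gg p x t θ / (Af p x t : ℝ)) ^ j *
    Complex.exp (gg p x t θ - Complex.I * (Nf p x t : ℝ) * (θ : ℝ))) (a := -(π * √(Vf p x t)))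
    (b := π * √(Vf p x t)) hs.ne'
  have e1 : -(π * √(Vf p x t)) / √(Vf p x t) = -π := by field_simp
  have e2 : (π * √(Vf p x t)) / √(Vf p x t) = π := by field_simp
  rw [e1, e2] at h
  have h' : ∫ u in (-(π * √(Vf p x t)))..(π * √(Vf p x t)), Psi p x j t u =
      √(Vf p x t) • ∫ θ in (-π)..π, (gg p x t θ / (Af p x t : ℝ)) ^ j *
    Complex.exp (gg p x t θ - Complex.I * (Nf p x t : ℝ) * (θ : ℝ)) := h
  rw [h', Complex.real_smul]
  have h2 : JJ (p + 2) n x t j = (Af p x t : ℂ) ^ j * ∫ θ in (-π)..π, (gg p x t θ / (Af p x t : ℝ)) ^ j *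
    Complex.exp (gg p x t θ - Complex.I * (Nf p x t : ℝ) * (θ : ℝ)) := by
    rw [← intervalIntegral.integral_const_mul]
    unfold JJ
    congr 1
    funext θ
    rw [FF_zero p t ht, hn]
    unfold gg
    rw [div_pow]
    push_cast
    field_simp
  rw [h2]
  push_cast
  field_simp

theorem gg_norm (p : ℕ) (x : ℝ) (hx : 0 < x) (t : ℝ) (ht : 0 < t) (θ : ℝ) :
    ‖gg p x t θ‖ ≤ |θ| * Nf p x t := by
  have h := FF_sub1 p t ht θ
  unfold gg Nf
  rw [← mul_sub, norm_mul, Complex.norm_real, Real.norm_of_nonneg hx.le]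
  calc _ ≤ x * (|θ| * MM p 1 t) := by gcongr
    _ = _ := by ring

theorem gg_re (p : ℕ) (x t θ : ℝ) : (gg p x t θ).re = -(x * DD p t θ) := by
  unfold gg DD
  rw [Complex.sub_re, Complex.re_ofReal_mul, Complex.re_ofReal_mul, Complex.ofReal_re]
  ring

theorem Phi_bound (p : ℕ) (x : ℝ) (hx : 0 < x) (j : ℕ) (hj : j ≤ 2) : ∃ C : ℝ, ∀ᶠ t in 𝓝[>] (0:ℝ), ∀ u : ℝ,
    ‖Phi p x j t u‖ ≤ C * (1 + u ^ 2)⁻¹ := by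
  obtain ⟨C, hC, h⟩ := dom_exp p x hx
  refine ⟨C, ?_⟩
  have hr := (ratio_tendsto p x hx).eventually (gt_mem_nhds (show √(1 / ((p : ℝ) + 2)) < 1 by
    rw [Real.sqrt_lt' one_pos, div_lt_iff₀ (by positivity)]
    have : (0 : ℝ) ≤ p := Nat.cast_nonneg p
    linarith))
  filter_upwards [h, hr, self_mem_nhdsWithin, MM_pos_aux p 2, MM_pos_aux p 1] with t hdom hr (ht : 0 < t) hM hM1 u
  have hV : 0 < Vf p x t := mul_pos hx hM
  have hN : 0 < Nf p x t := mul_pos hx hM1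
  have hA : 0 < Af p x t := Real.sqrt_pos.2 (mul_pos hN ht)
  have hs : 0 < √(Vf p x t) := Real.sqrt_pos.2 hV
  unfold Phi
  by_cases hu : u ∈ Set.Ioc (-(π * √(Vf p x t))) (π * √(Vf p x t))
  · rw [Set.indicator_of_mem hu]
    unfold Psi
    set θ := u / √(Vf p x t) with hθ
    have hθpi : |θ| ≤ π := by
      rw [hθ, abs_div, abs_of_pos hs, div_le_iff₀ hs, abs_le]
      exact ⟨hu.1.le, hu.2⟩
    have hθV : θ ^ 2 * (x * MM p 2 t) = u ^ 2 := by
      rw [hθ, div_pow, Real.sq_sqrt hV.le]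
      change u ^ 2 / Vf p x t * Vf p x t = u ^ 2
      field_simp
    have h1 := hdom θ hθpi
    rw [hθV] at h1
    have h2 : ‖gg p x t θ / (Af p x t : ℝ)‖ ≤ |u| := by
      rw [norm_div, Complex.norm_real, Real.norm_of_nonneg hA.le, div_le_iff₀ hA]
      refine (gg_norm p x hx t ht θ).trans ?_
      rw [hθ, abs_div, abs_of_pos hs]
      rw [div_lt_one (by positivity)] at hr
      rw [div_mul_eq_mul_div, div_le_iff₀ hs, mul_assoc]
      gcongr
    rw [norm_mul, norm_pow, Complex.norm_exp]
    have h3 : (gg p x t θ - Complex.I * (Nf p x t : ℝ) * (θ : ℝ)).re = -(x * DD p t θ) := by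
      rw [Complex.sub_re, gg_re]; simp
    rw [h3]
    have h4 : ‖gg p x t θ / (Af p x t : ℝ)‖ ^ j ≤ 1 + u ^ 2 := by
      have h5 : ‖gg p x t θ / (Af p x t : ℝ)‖ ^ j ≤ |u| ^ j := by gcongr
      refine h5.trans ?_
      rw [← sq_abs u]
      interval_cases j
      · simp; positivity
      · nlinarith [sq_nonneg (|u| - 1), abs_nonneg u]
      · simp
    rw [← div_eq_mul_inv, le_div_iff₀ (by positivity)]
    calc _ ≤ (1 + u ^ 2) * exp (-(x * DD p t θ)) * (1 + u ^ 2) := by gcongr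
      _ = exp (-(x * DD p t θ)) * (1 + u ^ 2) ^ 2 := by ring
      _ ≤ C := h1
  · rw [Set.indicator_of_notMem hu, norm_zero]
    positivity

theorem Phi_ptwise (p : ℕ) (x : ℝ) (hx : 0 < x) (j : ℕ) (u : ℝ) :
    Tendsto (fun t => Phi p x j t u) (𝓝[>] 0)
      (𝓝 ((Complex.I * u * (√(1 / ((p : ℝ) + 2)) : ℝ)) ^ j * Complex.exp (-(u : ℂ) ^ 2 / 2))) := by
  have hsV : Tendsto (fun t => √(Vf p x t)) (𝓝[>] 0) atTop :=
    Real.tendsto_sqrt_atTop.comp (Vf_atTop p x hx)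
  have hbase : ∀ᶠ t in 𝓝[>] (0:ℝ), 0 < t ∧ 0 < Vf p x t ∧ 0 < Nf p x t ∧ 0 < Af p x t := by
    filter_upwards [self_mem_nhdsWithin, MM_pos_aux p 2, MM_pos_aux p 1] with t (ht : 0 < t) hM hM1
    have hN : 0 < Nf p x t := mul_pos hx hM1
    exact ⟨ht, mul_pos hx hM, hN, Real.sqrt_pos.2 (mul_pos hN ht)⟩
  have hΨ : Tendsto (fun t => Psi p x j t u) (𝓝[>] 0)
      (𝓝 ((Complex.I * u * (√(1 / ((p : ℝ) + 2)) : ℝ)) ^ j * Complex.exp (-(u : ℂ) ^ 2 / 2))) := by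
    unfold Psi
    refine Tendsto.mul (Tendsto.pow ?_ j) ((Complex.continuous_exp.tendsto _).comp ?_)
    · have hr : Tendsto (fun t => Complex.I * u * ((Nf p x t / (Af p x t * √(Vf p x t)) : ℝ) : ℂ)) (𝓝[>] 0)
        (𝓝 (Complex.I * u * (√(1 / ((p : ℝ) + 2)) : ℝ))) :=
        ((Complex.continuous_ofReal.tendsto _).comp (ratio_tendsto p x hx)).const_mul _
      have herr : Tendsto (fun t => gg p x t (u / √(Vf p x t)) / (Af p x t : ℝ) -
          Complex.I * u * ((Nf p x t / (Af p x t * √(Vf p x t)) : ℝ) : ℂ)) (𝓝[>] 0) (𝓝 0) := by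
        have hz : Tendsto (fun t => 3 * u ^ 2 / Af p x t) (𝓝[>] 0) (𝓝 0) :=
          (Af_atTop p x hx).const_div_atTop _
        refine squeeze_zero_norm' ?_ hz
        filter_upwards [hbase] with t ⟨ht, hV, hN, hA⟩
        have hs : 0 < √(Vf p x t) := Real.sqrt_pos.2 hV
        have hA' : (Af p x t : ℂ) ≠ 0 := by exact_mod_cast hA.ne'
        have hs' : (√(Vf p x t) : ℂ) ≠ 0 := by exact_mod_cast hs.ne'
        set θ := u / √(Vf p x t) with hθ
        have e : gg p x t θ / (Af p x t : ℝ) - Complex.I * u * ((Nf p x t / (Af p x t * √(Vf p x t)) : ℝ) : ℂ)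
            = x * (FF (bb (p + 2)) t θ - MM p 0 t - Complex.I * θ * MM p 1 t) / (Af p x t : ℝ) := by
          unfold gg
          rw [hθ]
          have : (Nf p x t : ℂ) = x * MM p 1 t := by unfold Nf; push_cast; rfl
          push_cast
          rw [this]
          field_simp
        rw [e, norm_div, norm_mul, Complex.norm_real, Complex.norm_real, Real.norm_of_nonneg hx.le,
          Real.norm_of_nonneg hA.le]
        refine div_le_div_of_nonneg_right ?_ hA.le
        have h2 := FF_sub2 p t ht θ
        calc _ ≤ x * (3 * |θ| ^ 2 * MM p 2 t) := by gcongr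
          _ = 3 * θ ^ 2 * Vf p x t := by rw [sq_abs]; unfold Vf; ring
          _ = 3 * u ^ 2 := by
            rw [hθ, div_pow, Real.sq_sqrt hV.le]; field_simp
      have := herr.add hr
      simpa using this
    · have herr : Tendsto (fun t => gg p x t (u / √(Vf p x t)) - Complex.I * (Nf p x t : ℝ) * (u / √(Vf p x t) : ℝ)
          - (-(u : ℂ) ^ 2 / 2)) (𝓝[>] 0) (𝓝 0) := by
        have hz := (WV_tendsto p x hx).const_mul (4 * |u| ^ 3)
        rw [mul_zero] at hz
        refine squeeze_zero_norm' ?_ hz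
        filter_upwards [hbase] with t ⟨ht, hV, hN, hA⟩
        have hs : 0 < √(Vf p x t) := Real.sqrt_pos.2 hV
        set θ := u / √(Vf p x t) with hθ
        have hθV : θ ^ 2 * Vf p x t = u ^ 2 := by
          rw [hθ, div_pow, Real.sq_sqrt hV.le]; field_simp
        have hθV' : (θ : ℂ) ^ 2 * (x * MM p 2 t) = (u : ℂ) ^ 2 := by
          have := congrArg (fun r : ℝ => (r : ℂ)) hθV
          unfold Vf at this
          push_cast at this
          exact this
        have e : gg p x t θ - Complex.I * (Nf p x t : ℝ) * (θ : ℝ) - (-(u : ℂ) ^ 2 / 2) =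
            x * (FF (bb (p + 2)) t θ - MM p 0 t - Complex.I * θ * MM p 1 t + θ ^ 2 / 2 * MM p 2 t) := by
          rw [← hθV']
          unfold gg Nf
          push_cast
          ring
        rw [e, norm_mul, Complex.norm_real, Real.norm_of_nonneg hx.le]
        have h3 := FF_sub3 p t ht θ
        calc _ ≤ x * (4 * |θ| ^ 3 * MM p 3 t) := by gcongr
          _ = 4 * |u| ^ 3 * (Wf p x t / √(Vf p x t) ^ 3) := by
            rw [hθ, abs_div, abs_of_pos hs, div_pow]; unfold Wf; ring
      have := herr.add_const (-(u : ℂ) ^ 2 / 2)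
      simpa using this
  refine hΨ.congr' ?_
  have hpi := Real.pi_pos
  filter_upwards [hsV.eventually (eventually_gt_atTop (|u| / π))] with t h1
  unfold Phi
  rw [div_lt_iff₀ hpi, mul_comm] at h1
  rw [Set.indicator_of_mem]
  exact ⟨(abs_lt.1 h1).1, (abs_lt.1 h1).2.le⟩

theorem Phi_tendsto (p : ℕ) (x : ℝ) (hx : 0 < x) (j : ℕ) (hj : j ≤ 2) :
    Tendsto (fun t => ∫ u, Phi p x j t u) (𝓝[>] 0)
      (𝓝 (∫ u : ℝ, (Complex.I * u * (√(1 / ((p : ℝ) + 2)) : ℝ)) ^ j * Complex.exp (-(u : ℂ) ^ 2 / 2))) := by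
  obtain ⟨C, hC⟩ := Phi_bound p x hx j hj
  refine tendsto_integral_filter_of_dominated_convergence (fun u => C * (1 + u ^ 2)⁻¹) ?_ ?_ ?_ ?_
  · filter_upwards [self_mem_nhdsWithin] with t (ht : 0 < t)
    unfold Phi
    exact ((Psi_cont p x j t ht).aestronglyMeasurable).indicator measurableSet_Ioc
  · filter_upwards [hC] with t h
    exact ae_of_all _ h
  · exact integrable_inv_one_add_sq.const_mul C
  · exact ae_of_all _ fun u => Phi_ptwise p x hx j u

theorem gauss0 : ∫ u : ℝ, exp (-u ^ 2 / 2) = √(2 * π) := by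
  have := integral_gaussian (1 / 2)
  rw [show π / (1 / 2) = 2 * π by ring] at this
  rw [← this]
  congr 1; funext u; congr 1; ring

theorem gauss_int (j : ℕ) : Integrable (fun u : ℝ => u ^ j * exp (-u ^ 2 / 2)) := by
  have := integrable_rpow_mul_exp_neg_mul_sq (b := 1 / 2) (by norm_num) (s := j)
    (by have : (0 : ℝ) ≤ j := Nat.cast_nonneg j
        linarith)
  refine this.congr (ae_of_all _ fun u => ?_)
  simp only [Real.rpow_natCast]
  congr 2; ring

theorem gauss_deriv (u : ℝ) : HasDerivAt (fun u : ℝ => exp (-u ^ 2 / 2)) (-(u * exp (-u ^ 2 / 2))) u := by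
  have h : HasDerivAt (fun u : ℝ => -u ^ 2 / 2) (-u) u := by
    have := ((hasDerivAt_pow 2 u).neg).div_const 2
    refine this.congr_deriv ?_
    simp
    ring
  convert h.exp using 1
  ring

theorem gauss1 : ∫ u : ℝ, u * exp (-u ^ 2 / 2) = 0 := by
  have h1 := gauss_int 1
  have h0 := gauss_int 0
  simp only [pow_one, pow_zero, one_mul] at h0 h1
  have := integral_eq_zero_of_hasDerivAt_of_integrable gauss_deriv h1.neg h0
  rw [integral_neg] at this
  linarith

theorem gauss2 : ∫ u : ℝ, u ^ 2 * exp (-u ^ 2 / 2) = √(2 * π) := by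
  have h2 := gauss_int 2
  have h1 := gauss_int 1
  have h0 := gauss_int 0
  simp only [pow_one, pow_zero, one_mul] at h0 h1
  have hd : ∀ u : ℝ, HasDerivAt (fun u : ℝ => u * exp (-u ^ 2 / 2))
      (exp (-u ^ 2 / 2) - u ^ 2 * exp (-u ^ 2 / 2)) u := by
    intro u
    refine ((hasDerivAt_id u).mul (gauss_deriv u)).congr_deriv ?_
    simp; ring
  have := integral_eq_zero_of_hasDerivAt_of_integrable hd (h0.sub h2) h1
  rw [integral_sub h0 h2, gauss0] at this
  linarith

theorem lim0 (c : ℝ) : ∫ u : ℝ, (Complex.I * u * c) ^ 0 * Complex.exp (-(u : ℂ) ^ 2 / 2) = (√(2 * π) : ℝ) := by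
  rw [← gauss0, ← integral_complex_ofReal]
  congr 1; funext u; push_cast; simp

theorem lim1 (c : ℝ) : ∫ u : ℝ, (Complex.I * u * c) ^ 1 * Complex.exp (-(u : ℂ) ^ 2 / 2) = 0 := by
  have h : ∀ u : ℝ, (Complex.I * u * c) ^ 1 * Complex.exp (-(u : ℂ) ^ 2 / 2) =
      (Complex.I * c) * ((u * exp (-u ^ 2 / 2) : ℝ) : ℂ) := by
    intro u; push_cast; ring
  simp_rw [h]
  rw [integral_const_mul, integral_complex_ofReal, gauss1]; simp

theorem lim2 (c : ℝ) : ∫ u : ℝ, (Complex.I * u * c) ^ 2 * Complex.exp (-(u : ℂ) ^ 2 / 2) =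
    -(c : ℂ) ^ 2 * (√(2 * π) : ℝ) := by
  have h : ∀ u : ℝ, (Complex.I * u * c) ^ 2 * Complex.exp (-(u : ℂ) ^ 2 / 2) =
      (-(c : ℂ) ^ 2) * ((u ^ 2 * exp (-u ^ 2 / 2) : ℝ) : ℂ) := by
    intro u
    rw [mul_pow, mul_pow, Complex.I_sq]
    push_cast; ring
  simp_rw [h]
  rw [integral_const_mul, integral_complex_ofReal, gauss2]
end

end

section
open Filter Topology Real MeasureTheory Asymptotics

noncomputable section

theorem MM1_anti (p : ℕ) (s t : ℝ) (hs : 0 < s) (hst : s ≤ t) : MM p 1 t ≤ MM p 1 s := by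
  refine hasSum_le (fun k => ?_) (MM_hasSum p 1 t (hs.trans_le hst)) (MM_hasSum p 1 s hs)
  have := bb_nonneg (p + 2) k
  gcongr

theorem MM1_cont (p : ℕ) (a : ℝ) (ha : 0 < a) : ContinuousOn (MM p 1) (Set.Icc a 1) := by
  unfold MM
  refine continuousOn_tsum (u := fun n : ℕ => bb (p + 2) n * (n : ℝ) ^ 1 * exp (-((n : ℝ) * a)))
    (fun n => by fun_prop) (MM_hasSum p 1 a ha).summable ?_
  intro n t ht
  have h1 := bb_nonneg (p + 2) n
  rw [Real.norm_of_nonneg (by positivity)]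
  have h2 := ht.1
  gcongr

theorem Nf_atTop (p : ℕ) (x : ℝ) (hx : 0 < x) : Tendsto (Nf p x) (𝓝[>] 0) atTop :=
  pow_atTop (p + 1) _ (mul_pos hx (mul_pos (by positivity) (ZP_pos p))) _ (Mx_tendsto p 1 x)

theorem saddle_exists (p : ℕ) (x : ℝ) (hx : 0 < x) (n : ℕ) (hn : Nf p x 1 ≤ n) :
    ∃ t : ℝ, 0 < t ∧ Nf p x t = n := by
  have h1 := (Nf_atTop p x hx).eventually (eventually_ge_atTop (n : ℝ))
  have h2 : ∀ᶠ t in 𝓝[>] (0:ℝ), t < 1 := (gt_mem_nhds one_pos).filter_mono nhdsWithin_le_nhds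
  obtain ⟨a, ⟨ha1, ha2⟩, (ha0 : 0 < a)⟩ := ((h1.and h2).and self_mem_nhdsWithin).exists
  have hc : ContinuousOn (Nf p x) (Set.Icc a 1) := by
    unfold Nf
    exact continuousOn_const.mul (MM1_cont p a ha0)
  obtain ⟨t, ht, hte⟩ := intermediate_value_Icc' ha2.le hc ⟨hn, ha1⟩
  exact ⟨t, ha0.trans_le ht.1, hte⟩

theorem saddle (p : ℕ) (x : ℝ) (hx : 0 < x) : ∃ τ : ℕ → ℝ, Tendsto τ atTop (𝓝[>] 0) ∧
    ∀ᶠ n : ℕ in atTop, Nf p x (τ n) = n := by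
  classical
  have hch : ∀ n : ℕ, ∃ t : ℝ, 0 < t ∧ (Nf p x 1 ≤ n → Nf p x t = n) := by
    intro n
    by_cases h : Nf p x 1 ≤ n
    · obtain ⟨t, ht, he⟩ := saddle_exists p x hx n h
      exact ⟨t, ht, fun _ => he⟩
    · exact ⟨1, one_pos, fun h' => absurd h' h⟩
  choose τ hτ using hch
  have hev : ∀ᶠ n : ℕ in atTop, Nf p x (τ n) = n := by
    filter_upwards [tendsto_natCast_atTop_atTop.eventually (eventually_ge_atTop (Nf p x 1))] with n hn
    exact (hτ n).2 hn
  refine ⟨τ, tendsto_nhdsWithin_iff.2 ⟨?_, Eventually.of_forall fun n => (hτ n).1⟩, hev⟩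
  rw [tendsto_order]
  constructor
  · intro a ha
    exact Eventually.of_forall fun n => ha.trans (hτ n).1
  · intro ε hε
    filter_upwards [hev, tendsto_natCast_atTop_atTop.eventually (eventually_gt_atTop (Nf p x ε))] with n h1 h2
    by_contra hcon
    push Not at hcon
    have h3 := MM1_anti p ε (τ n) hε hcon
    have h4 : Nf p x (τ n) ≤ Nf p x ε := by unfold Nf; gcongr
    rw [h1] at h4
    exact absurd h4 (not_le.2 h2)

def GG (p : ℕ) (x t : ℝ) : ℂ :=
  (∫ u, Phi p x 2 t u) / (∫ u, Phi p x 0 t u) +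
    ((1 / Af p x t : ℝ) : ℂ) * ((∫ u, Phi p x 1 t u) / (∫ u, Phi p x 0 t u)) +
    ((x * MM p 0 t / (Nf p x t * t) : ℝ) : ℂ) - ((∫ u, Phi p x 1 t u) / (∫ u, Phi p x 0 t u)) ^ 2

theorem c0_tendsto (p : ℕ) (x : ℝ) (hx : 0 < x) :
    Tendsto (fun t => x * MM p 0 t / (Nf p x t * t)) (𝓝[>] 0) (𝓝 (1 / ((p : ℝ) + 1))) := by
  have hZ := ZP_pos p
  have h := (Mx_tendsto p 0 x).div (Mx_tendsto p 1 x) (by positivity)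
  have e : x * ((p + 0).factorial * ZP p) / (x * ((p + 1).factorial * ZP p)) = 1 / ((p : ℝ) + 1) := by
    rw [Nat.factorial_succ p]
    push_cast
    field_simp
    simp
  rw [e] at h
  refine h.congr' ?_
  filter_upwards [self_mem_nhdsWithin, MM_pos_aux p 1] with t (ht : 0 < t) hM
  simp only [Pi.div_apply]
  unfold Nf
  field_simp
  ring

theorem sqrt2pi_ne : ((√(2 * π) : ℝ) : ℂ) ≠ 0 := by
  have : 0 < √(2 * π) := Real.sqrt_pos.2 (by positivity)
  exact_mod_cast this.ne'

theorem GG_tendsto (p : ℕ) (x : ℝ) (hx : 0 < x) :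
    Tendsto (GG p x) (𝓝[>] 0) (𝓝 ((1 / (((p : ℝ) + 2) * ((p : ℝ) + 1)) : ℝ) : ℂ)) := by
  have h0 := Phi_tendsto p x hx 0 (by norm_num)
  have h1 := Phi_tendsto p x hx 1 (by norm_num)
  have h2 := Phi_tendsto p x hx 2 (by norm_num)
  rw [lim0] at h0
  rw [lim1] at h1
  rw [lim2] at h2
  have hne := sqrt2pi_ne
  have hA : Tendsto (fun t => ((1 / Af p x t : ℝ) : ℂ)) (𝓝[>] 0) (𝓝 ((0 : ℝ) : ℂ)) :=
    (Complex.continuous_ofReal.tendsto _).comp ((Af_atTop p x hx).const_div_atTop 1)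
  have hc := (Complex.continuous_ofReal.tendsto _).comp (c0_tendsto p x hx)
  have h10 := h1.div h0 hne
  have h := (((h2.div h0 hne).add (hA.mul h10)).add hc).sub (h10.pow 2)
  have e : -((√(1 / ((p : ℝ) + 2)) : ℝ) : ℂ) ^ 2 * ((√(2 * π) : ℝ) : ℂ) / ((√(2 * π) : ℝ) : ℂ) +
      ((0 : ℝ) : ℂ) * (0 / ((√(2 * π) : ℝ) : ℂ)) + ((1 / ((p : ℝ) + 1) : ℝ) : ℂ) -
      (0 / ((√(2 * π) : ℝ) : ℂ)) ^ 2 = ((1 / (((p : ℝ) + 2) * ((p : ℝ) + 1)) : ℝ) : ℂ) := by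
    have hsq : ((√(1 / ((p : ℝ) + 2)) : ℝ) : ℂ) ^ 2 = ((1 / ((p : ℝ) + 2) : ℝ) : ℂ) := by
      rw [← Complex.ofReal_pow, Real.sq_sqrt (by positivity)]
    rw [hsq, mul_div_assoc, div_self hne, zero_div, mul_one, mul_zero, add_zero,
      zero_pow (by norm_num), sub_zero, ← Complex.ofReal_neg, ← Complex.ofReal_add]
    congr 1
    field_simp
    ring
  rw [e] at h
  exact h

theorem varK_GG (p : ℕ) (x : ℝ) (hx : 0 < x) : ∀ᶠ t in 𝓝[>] (0:ℝ), ∀ n : ℕ, Nf p x t = n →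
    varK (p + 2) n x = n * t * (GG p x t).re := by
  have h0 := Phi_tendsto p x hx 0 (by norm_num)
  rw [lim0] at h0
  have hne := h0.eventually_ne sqrt2pi_ne
  filter_upwards [hne, self_mem_nhdsWithin, MM_pos_aux p 2, MM_pos_aux p 1] with t hne (ht : 0 < t) hM hM1 n hn
  have hV : 0 < Vf p x t := mul_pos hx hM
  have hN : 0 < Nf p x t := mul_pos hx hM1
  have hA : 0 < Af p x t := Real.sqrt_pos.2 (mul_pos hN ht)
  have hs : 0 < √(Vf p x t) := Real.sqrt_pos.2 hV
  have hA' : (Af p x t : ℂ) ≠ 0 := by exact_mod_cast hA.ne'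
  have hs' : (√(Vf p x t) : ℂ) ≠ 0 := by exact_mod_cast hs.ne'
  have hA2 : (Af p x t : ℂ) ^ 2 = ((n * t : ℝ) : ℂ) := by
    rw [← Complex.ofReal_pow]; unfold Af; rw [Real.sq_sqrt (by positivity), hn]
  have hJ := fun j => JJ_Phi p x j n t ht hV hA hn
  have hJ0 : JJ (p + 2) n x t 0 ≠ 0 := by
    rw [hJ]
    refine mul_ne_zero (mul_ne_zero ?_ (pow_ne_zero _ hA')) hne
    push_cast
    exact div_ne_zero one_ne_zero hs'
  have hv := varK_JJ (p + 2) n x t (bb_summable p t ht) hJ0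
  have key : (varK (p + 2) n x : ℂ) = ((n * t : ℝ) : ℂ) * GG p x t := by
    rw [hv, hJ, hJ, hJ, FF_zero p t ht]
    unfold GG
    rw [hn]
    have hnt : ((n * t : ℝ) : ℂ) ≠ 0 := by rw [← hA2]; exact pow_ne_zero _ hA'
    have e3 : ((x * MM p 0 t / (n * t) : ℝ) : ℂ) = x * MM p 0 t / ((n * t : ℝ) : ℂ) := by push_cast; rfl
    rw [e3, ← hA2]
    push_cast
    field_simp
  have := congrArg Complex.re key
  rw [Complex.ofReal_re, Complex.re_ofReal_mul] at this
  exact this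

theorem main_aux (p : ℕ) (x : ℝ) (hx : 0 < x) :
    Tendsto (fun n : ℕ =>
        varK (p + 2) n x /
          ((x * Kconst (p + 2)) ^ ((1 : ℝ) / ((p + 2 : ℕ) : ℝ)) / (((p + 2 : ℕ) : ℝ) * (((p + 2 : ℕ) : ℝ) - 1)) *
            (n : ℝ) ^ ((((p + 2 : ℕ) : ℝ) - 1) / ((p + 2 : ℕ) : ℝ))))
      atTop (𝓝 1) := by
  obtain ⟨τ, hτ, hN⟩ := saddle p x hx
  have hK : 0 < x * Kconst (p + 2) := by
    rw [Kconst_eq]; exact mul_pos hx (mul_pos (by positivity) (ZP_pos p))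
  set B := (x * Kconst (p + 2)) ^ ((1 : ℝ) / ((p + 2 : ℕ) : ℝ)) with hB
  have hBpos : 0 < B := Real.rpow_pos_of_pos hK _
  have hG : Tendsto (fun n => (GG p x (τ n)).re) atTop (𝓝 (1 / (((p : ℝ) + 2) * ((p : ℝ) + 1)))) := by
    have := (Complex.continuous_re.tendsto _).comp ((GG_tendsto p x hx).comp hτ)
    rw [Complex.ofReal_re] at this
    exact this
  have hT : Tendsto (fun n : ℕ => (n * τ n ^ (p + 2)) ^ ((1 : ℝ) / ((p + 2 : ℕ) : ℝ))) atTop (𝓝 B) := by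
    have h1 := (Mx_tendsto p 1 x).comp hτ
    rw [← Kconst_eq] at h1
    have h2 : Tendsto (fun n : ℕ => n * τ n ^ (p + 2)) atTop (𝓝 (x * Kconst (p + 2))) := by
      refine h1.congr' ?_
      filter_upwards [hN] with n hn
      simp only [Function.comp]
      rw [← hn]; unfold Nf; ring
    exact h2.rpow_const (Or.inl hK.ne')
  have hfin := (hG.mul hT).div_const (B / (((p : ℝ) + 2) * ((p : ℝ) + 1)))
  have e : 1 / (((p : ℝ) + 2) * ((p : ℝ) + 1)) * B / (B / (((p : ℝ) + 2) * ((p : ℝ) + 1))) = 1 := by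
    field_simp
  rw [e] at hfin
  refine hfin.congr' ?_
  have hvar := hτ.eventually (varK_GG p x hx)
  have hpos := hτ.eventually self_mem_nhdsWithin
  filter_upwards [hN, hvar, hpos, eventually_gt_atTop 0] with n hn hv (ht : 0 < τ n) hn0
  rw [hv n hn]
  have hn0' : (0 : ℝ) < n := by exact_mod_cast hn0
  have e1 : ((p + 2 : ℕ) : ℝ) * (((p + 2 : ℕ) : ℝ) - 1) = ((p : ℝ) + 2) * ((p : ℝ) + 1) := by
    push_cast; ring
  have hl : ((p + 2 : ℕ) : ℝ) ≠ 0 := by positivity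
  have e2 : ((n : ℝ) * τ n ^ (p + 2)) ^ ((1 : ℝ) / ((p + 2 : ℕ) : ℝ)) * (n : ℝ) ^ ((((p + 2 : ℕ) : ℝ) - 1) / ((p + 2 : ℕ) : ℝ))
      = n * τ n := by
    rw [Real.mul_rpow hn0'.le (by positivity), one_div, Real.pow_rpow_inv_natCast ht.le (by omega),
      mul_right_comm, ← Real.rpow_add hn0']
    rw [show (((p + 2 : ℕ) : ℝ))⁻¹ + (((p + 2 : ℕ) : ℝ) - 1) / ((p + 2 : ℕ) : ℝ) = 1 by field_simp; ring, Real.rpow_one]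
  rw [e1, ← e2]
  have hnp : 0 < (n : ℝ) ^ ((((p + 2 : ℕ) : ℝ) - 1) / ((p + 2 : ℕ) : ℝ)) := Real.rpow_pos_of_pos hn0' _
  set Q := (n : ℝ) ^ ((((p + 2 : ℕ) : ℝ) - 1) / ((p + 2 : ℕ) : ℝ))
  field_simp

end
end

/-- `Var(K_{ℓ,n}) ~ ((x K_ℓ)^{1/ℓ}/(ℓ(ℓ-1))) n^{(ℓ-1)/ℓ}` as `n → ∞`. -/
theorem var_asymptotic (ℓ : ℕ) (hℓ : 2 ≤ ℓ) (x : ℝ) (hx : 0 < x) :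
    Tendsto (fun n : ℕ =>
        varK ℓ n x /
          ((x * Kconst ℓ) ^ ((1 : ℝ) / (ℓ : ℝ)) / ((ℓ : ℝ) * ((ℓ : ℝ) - 1)) *
            (n : ℝ) ^ (((ℓ : ℝ) - 1) / (ℓ : ℝ))))
      atTop (nhds 1) := by
  obtain ⟨p, rfl⟩ := Nat.exists_eq_add_of_le' hℓ
  exact main_aux p x hx
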